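/- arXiv:2008.12944 — 4 statements merged into one kernel-verified Lean document; each statement's English description precedes it below -/
import Mathlib

section
/- Let k be an algebraically closed field and let f_1, f_2, ..., f_s be nonconstant homogeneous polynomials in the polynomial ring k[x_1, ..., x_r]. If r > s, then there exists a nonzero point γ = (γ_1, ..., γ_r) ∈ k^r \ {0} such that f_1(γ) = 0, f_2(γ) = 0, ..., f_s(γ) = 0. -/
open MvPolynomial

/-!
If `a` were the only common zero of `f₁, …, fₛ`, then by the Nullstellensatz the maximal ideal of
`a` would be the radical of `(f₁, …, fₛ)`, hence a minimal prime over it, and Krull's height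
theorem would bound its height by `s`. But every maximal ideal of a polynomial ring in `r`
variables over a field has height `r`. So for `r > s` no common zero is the only one, and
nonconstant homogeneous polynomials have the common zero `0`.
-/

theorem height_polynomial_eq_add_one_of_isMaximal {R : Type*} [CommRing R] [IsNoetherianRing R]
    [IsJacobsonRing R] {d : ℕ∞} (hR : ∀ m : Ideal R, m.IsMaximal → m.height = d)
    (M : Ideal (Polynomial R)) [M.IsMaximal] : M.height = d + 1 := by
  rw [Polynomial.height_eq_height_add_one (M.under R) M,
    hR (M.under R) (Polynomial.isMaximal_comap_C_of_isJacobsonRing M)]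

theorem height_eq_natCard_of_isMaximal {k σ : Type*} [Field k] [Finite σ]
    (M : Ideal (MvPolynomial σ k)) [hM : M.IsMaximal] : M.height = Nat.card σ := by
  induction σ using Finite.induction_empty_option with
  | of_equiv e ih =>
    let φ := (renameEquiv k e).toRingEquiv
    have : (M.comap φ).IsMaximal := Ideal.comap_isMaximal_of_equiv φ
    rw [← φ.height_comap, ih, Nat.card_congr e]
  | h_empty => simpa using Ideal.height_le_ringKrullDim_of_ne_top hM.ne_top
  | @h_option τ _ ih =>
    let φ := (optionEquivLeft k τ).symm.toRingEquiv
    have : (M.comap φ).IsMaximal := Ideal.comap_isMaximal_of_equiv φ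
    rw [← φ.height_comap, height_polynomial_eq_add_one_of_isMaximal (fun m _ => ih m),
      Finite.card_option, Nat.cast_succ]

theorem vanishingIdeal_singleton_mem_minimalPrimes {k K σ : Type*} [Field k] [Field K]
    [Algebra k K] [IsAlgClosed K] [Finite σ] {I : Ideal (MvPolynomial σ k)} {a : σ → K}
    (ha : zeroLocus K I = {a}) : vanishingIdeal k {a} ∈ I.minimalPrimes := by
  rw [← I.radical_minimalPrimes, ← vanishingIdeal_zeroLocus_eq_radical (K := K), ha,
    Ideal.minimalPrimes_eq_subsingleton_self]
  exact Set.mem_singleton _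

theorem natCard_le_card_of_zeroLocus_span_eq_singleton {k σ : Type*} [Field k] [IsAlgClosed k]
    [Finite σ] {S : Finset (MvPolynomial σ k)} {a : σ → k}
    (ha : zeroLocus k (Ideal.span (S : Set (MvPolynomial σ k))) = {a}) : Nat.card σ ≤ S.card := by
  have height_le : (vanishingIdeal k {a}).height ≤ S.card :=
    Ideal.height_le_card_of_mem_minimalPrimes_span_finset
      (vanishingIdeal_singleton_mem_minimalPrimes ha)
  rw [height_eq_natCard_of_isMaximal] at height_le
  exact_mod_cast height_le

theorem eval_zero_eq_zero_of_isHomogeneous {R σ : Type*} [CommSemiring R] {p : MvPolynomial σ R}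
    {n : ℕ} (hp : p.IsHomogeneous n) (hconst : ∀ c, p ≠ C c) : eval 0 p = 0 := by
  have hn : n ≠ 0 := by
    rintro rfl
    exact hconst _ (totalDegree_eq_zero_iff_eq_C.1 ((totalDegree_zero_iff_isHomogeneous σ).2 hp))
  rw [eval_zero, constantCoeff_eq]
  exact hp.coeff_eq_zero (by simpa using hn.symm)

theorem statement_0_general {k σ ι : Type*} [Field k] [IsAlgClosed k] [Fintype σ] [Fintype ι]
    (hcard : Fintype.card ι < Fintype.card σ) (f : ι → MvPolynomial σ k) {a : σ → k}
    (ha : ∀ i, eval a (f i) = 0) : ∃ b ≠ a, ∀ i, eval b (f i) = 0 := by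
  classical
  by_contra! hunique
  have hlocus : zeroLocus k (Ideal.span (Finset.univ.image f : Set (MvPolynomial σ k))) = {a} := by
    ext b
    suffices (∀ i, eval b (f i) = 0) ↔ b = a by simpa [zeroLocus_span, aeval_eq_eval]
    refine ⟨fun hb => ?_, fun hb => hb ▸ ha⟩
    by_contra hne
    obtain ⟨i, hi⟩ := hunique b hne
    exact hi (hb i)
  have hle := (natCard_le_card_of_zeroLocus_span_eq_singleton hlocus).trans Finset.card_image_le
  rw [Nat.card_eq_fintype_card, Finset.card_univ] at hle
  exact hcard.not_ge hle

/-- **Multivariate Fundamental Theorem of Algebra.** If `f_1, ..., f_s` are nonconstant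
homogeneous polynomials in `k[x_1, ..., x_r]` over an algebraically closed field `k` and
`r > s`, then the `f_i` have a common nonzero root. -/
theorem statement_0 {k : Type*} [Field k] [IsAlgClosed k] {r s : ℕ} (hrs : r > s)
    (f : Fin s → MvPolynomial (Fin r) k)
    (hhom : ∀ i, ∃ n : ℕ, (f i).IsHomogeneous n)
    (hnonconst : ∀ i, ∀ c : k, f i ≠ C c) :
    ∃ γ : Fin r → k, γ ≠ 0 ∧ ∀ i, eval γ (f i) = 0 :=
  statement_0_general (by simpa using hrs) f fun i =>
    (hhom i).elim fun _ hn => eval_zero_eq_zero_of_isHomogeneous hn (hnonconst i)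
end

section
/- Let k be an algebraically closed field and S = k[x_1,...,x_r] the polynomial ring in r variables over k. Let F be an S-module and d : F → F an S-linear map with d ∘ d = 0, and suppose the homology module ker(d)/im(d) is nonzero and finite-dimensional as a k-vector space. If F admits a free flag, i.e., a chain of S-submodules 0 = F^{-1} ⊆ F^0 ⊆ F^1 ⊆ ... ⊆ F^l = F such that each quotient F^i/F^{i-1} is a free S-module of finite rank and d(F^i) ⊆ F^{i-1} for all 0 ≤ i ≤ l, then l ≥ r. -/
open MvPolynomial

open RingTheory.Sequence

/-!
If the annihilator of the homology of `(F, d)` contains enough powers of a sequence regular on `F`,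
that sequence bounds the length of a flag from below. Suppose `y` is `F`-regular and kills the
homology of `F`. For a cycle `c` write `y c = d b`; then `b` is a cycle modulo `y`. If `b` is
homologous modulo `y` to an element of `F^i`, applying `d` and dividing by `y` shows that `c` is
homologous to an element of a retract `F^{i-1}` of `F`. So the flag drops by one step for each
element of the sequence, and when it is exhausted every cycle is a boundary. Since the square of
the annihilator of the homology of `F` kills that of `F / y F`, the element needed at each stage
can be a high power of one that kills the homology of `F`.

Over a polynomial ring, finiteness of the homology makes each variable `x_j` integral on it, and
the monic polynomials `p_j(x_j)` that kill it form a regular sequence together with their powers.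
-/

section Homology

variable {S M : Type*} [CommRing S] [AddCommGroup M] [Module S M]

/-- The homology `ker d / im d` of a differential module `(M, d)`. The definition makes sense for
any endomorphism: it is the quotient of `ker d` by `im d ∩ ker d`, so that `d ∘ d = 0` need not be
part of the data. -/
abbrev Homology (d : M →ₗ[S] M) : Type _ :=
  ↥(LinearMap.ker d) ⧸ Submodule.comap (LinearMap.ker d).subtype (LinearMap.range d)

theorem subsingleton_homology_iff {d : M →ₗ[S] M} :
    Subsingleton (Homology d) ↔ LinearMap.ker d ≤ LinearMap.range d := by
  rw [Submodule.Quotient.subsingleton_iff, Submodule.comap_subtype_eq_top]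

theorem mem_annihilator_homology_iff {d : M →ₗ[S] M} {y : S} :
    y ∈ Module.annihilator S (Homology d) ↔ ∀ c, d c = 0 → ∃ b, d b = y • c := by
  rw [Module.mem_annihilator, (Submodule.Quotient.mk_surjective _).forall]
  simp only [← Submodule.Quotient.mk_smul, Submodule.Quotient.mk_eq_zero, Subtype.forall]
  rfl

theorem mk_quotSMulTop_eq_zero_iff {y : S} {x : M} :
    (Submodule.Quotient.mk x : QuotSMulTop y M) = 0 ↔ ∃ z, x = y • z := by
  simp only [Submodule.Quotient.mk_eq_zero, Submodule.mem_smul_pointwise_iff_exists,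
    Submodule.mem_top, true_and, eq_comm (a := x)]

theorem annihilator_homology_sq_le {d : M →ₗ[S] M} (hd : d ∘ₗ d = 0) {y : S}
    (hy : IsSMulRegular M y) :
    Module.annihilator S (Homology d) ^ 2 ≤
      Module.annihilator S (Homology (QuotSMulTop.map y d)) := by
  rw [pow_two, Ideal.mul_le]
  intro v hv w hw
  rw [mem_annihilator_homology_iff] at hv hw ⊢
  rw [(Submodule.Quotient.mk_surjective _).forall]
  intro c hc
  obtain ⟨n, hn⟩ : ∃ n, d c = y • n := mk_quotSMulTop_eq_zero_iff.1 hc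
  have hdn : d n = 0 := hy.right_eq_zero_of_smul <| by
    rw [← map_smul, ← hn]
    exact LinearMap.congr_fun hd c
  obtain ⟨e, he⟩ := hv n hdn
  have hcycle : d (v • c - y • e) = 0 := by
    simp only [map_sub, map_smul, hn, he, smul_comm v y, sub_self]
  obtain ⟨f, hf⟩ := hw _ hcycle
  refine ⟨Submodule.Quotient.mk f, ?_⟩
  rw [QuotSMulTop.map_apply_mk, ← Submodule.Quotient.mk_smul, ← sub_eq_zero,
    ← Submodule.Quotient.mk_sub, mk_quotSMulTop_eq_zero_iff]
  refine ⟨-(w • e), ?_⟩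
  rw [hf]
  module

end Homology

section Descent

variable {S M : Type*} [CommRing S] [AddCommGroup M] [Module S M]

theorem ker_le_range_sup_range_of_quotSMulTop {d : M →ₗ[S] M} (hd : d ∘ₗ d = 0) {y : S}
    (hy : IsSMulRegular M y) (hann : y ∈ Module.annihilator S (Homology d))
    {p q : M →ₗ[S] M} (hqp : q ∘ₗ d ∘ₗ p = d ∘ₗ p)
    (hquot : LinearMap.ker (QuotSMulTop.map y d) ≤
      LinearMap.range (QuotSMulTop.map y p) ⊔ LinearMap.range (QuotSMulTop.map y d)) :
    LinearMap.ker d ≤ LinearMap.range q ⊔ LinearMap.range d := by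
  intro c hc
  obtain ⟨b, hb⟩ := mem_annihilator_homology_iff.1 hann c hc
  have hb_cycle : Submodule.Quotient.mk b ∈ LinearMap.ker (QuotSMulTop.map y d) :=
    mk_quotSMulTop_eq_zero_iff.2 ⟨c, hb⟩
  obtain ⟨_, ⟨u, rfl⟩, _, ⟨v, rfl⟩, huv⟩ := Submodule.mem_sup.1 (hquot hb_cycle)
  obtain ⟨u, rfl⟩ := Submodule.Quotient.mk_surjective _ u
  obtain ⟨v, rfl⟩ := Submodule.Quotient.mk_surjective _ v
  obtain ⟨a, ha⟩ : ∃ a, b - (p u + d v) = y • a := by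
    rw [← mk_quotSMulTop_eq_zero_iff, Submodule.Quotient.mk_sub, sub_eq_zero]
    exact huv.symm
  have hdp : d (p u) = y • (c - d a) := by
    have hddv : d (d v) = 0 := LinearMap.congr_fun hd v
    have hdb := congrArg d ha
    rw [map_sub, map_add, map_smul, hddv, add_zero, hb] at hdb
    rw [smul_sub, ← hdb, sub_sub_cancel]
  have hfix : q (c - d a) = c - d a := hy <| by
    simp only
    rw [← map_smul, ← hdp]
    exact LinearMap.congr_fun hqp u
  exact Submodule.mem_sup.2 ⟨_, ⟨c - d a, hfix⟩, _, ⟨a, rfl⟩, sub_add_cancel c (d a)⟩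

/- The flag enters through retractions `π n` onto its steps, because equations between
endomorphisms, unlike inclusions of submodules, pass to `M / y M`. -/
theorem ker_le_range_sup_range_of_isWeaklyRegular {rs : List S} (hrs : IsWeaklyRegular M rs)
    {d : M →ₗ[S] M} (hd : d ∘ₗ d = 0)
    (hann : ∀ y ∈ rs, y ∈ Module.annihilator S (Homology d) ^ 2 ^ rs.length)
    {π : ℕ → M →ₗ[S] M} (hπ : ∀ n, π n ∘ₗ d ∘ₗ π (n + 1) = d ∘ₗ π (n + 1)) {m : ℕ}
    (htop : π (m + rs.length) = LinearMap.id) :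
    LinearMap.ker d ≤ LinearMap.range (π m) ⊔ LinearMap.range d := by
  induction rs generalizing M m with
  | nil =>
    rw [List.length_nil, add_zero] at htop
    simp [htop]
  | cons y rs ih =>
    obtain ⟨hy, hrs⟩ := (isWeaklyRegular_cons_iff M y rs).1 hrs
    have hy_ann : y ∈ Module.annihilator S (Homology d) :=
      Ideal.pow_le_self (by positivity) (hann y List.mem_cons_self)
    refine ker_le_range_sup_range_of_quotSMulTop hd hy hy_ann (hπ m) ?_
    refine ih (π := fun n => QuotSMulTop.map y (π n)) hrs ?_ ?_ ?_ ?_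
    · rw [← QuotSMulTop.map_comp, hd, map_zero]
    · intro z hz
      have hz_ann := hann z (List.mem_cons_of_mem y hz)
      rw [List.length_cons, pow_succ', pow_mul] at hz_ann
      exact Ideal.pow_right_mono (annihilator_homology_sq_le hd hy) _ hz_ann
    · intro n
      simp only [← QuotSMulTop.map_comp, hπ]
    · rw [add_assoc, add_comm 1, ← List.length_cons (a := y), htop, QuotSMulTop.map_id]

end Descent

section Flag

variable {S M : Type*} [CommRing S] [AddCommGroup M] [Module S M]

/-- A finite filtration of `M` by submodules with projective successive quotients, each of which
`d` maps into its predecessor. The indexing is such that `G 0 = 0` and `G N = M`, so that a flag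
`0 = F^{-1} ⊆ ... ⊆ F^l = M` has `G n = F^{n-1}` and `N = l + 1`. -/
structure IsProjectiveFlag (d : M →ₗ[S] M) (G : ℕ → Submodule S M) (N : ℕ) : Prop where
  bot : G 0 = ⊥
  top : G N = ⊤
  le_succ : ∀ i, G i ≤ G (i + 1)
  projective : ∀ i < N, Module.Projective S (↥(G (i + 1)) ⧸ (G i).comap (G (i + 1)).subtype)
  map_mem : ∀ i, ∀ x ∈ G (i + 1), d x ∈ G i

theorem projective_quotient_of_le {A B : Submodule S M} (hAB : A ≤ B)
    [Module.Projective S (B ⧸ A.comap B.subtype)] [Module.Projective S (M ⧸ B)] :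
    Module.Projective S (M ⧸ A) := by
  obtain ⟨σ, hσ⟩ := (Submodule.factor hAB).exists_rightInverse_of_surjective
    (LinearMap.range_eq_top.2 (Submodule.factor_surjective hAB))
  let j : (B ⧸ A.comap B.subtype) →ₗ[S] M ⧸ A := Submodule.mapQ _ A B.subtype le_rfl
  have hj : Function.Injective j := by
    rw [← LinearMap.ker_eq_bot]
    simp [j, Submodule.ker_mapQ]
  have hexact : LinearMap.range j = LinearMap.ker (Submodule.factor hAB) := by
    simp [j, Submodule.range_mapQ, Submodule.factor, Submodule.ker_mapQ]
  exact .of_equiv (lequivProdOfRightSplitExact hj hexact hσ)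

theorem exists_isProj_of_projective_quotient (A : Submodule S M) [Module.Projective S (M ⧸ A)] :
    ∃ π : M →ₗ[S] M, LinearMap.IsProj A π := by
  obtain ⟨σ, hσ⟩ := A.mkQ.exists_rightInverse_of_surjective A.range_mkQ
  refine ⟨LinearMap.id - σ ∘ₗ A.mkQ, fun x => ?_, fun x hx => ?_⟩
  · rw [LinearMap.sub_apply, ← Submodule.Quotient.eq]
    exact (LinearMap.congr_fun hσ (A.mkQ x)).symm
  · simp [(Submodule.Quotient.mk_eq_zero A).2 hx]

theorem isWeaklyRegular_of_flat [Module.Flat S M] {rs : List S} (hrs : IsWeaklyRegular S rs) :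
    IsWeaklyRegular M rs :=
  ((TensorProduct.rid S M).isWeaklyRegular_congr rs).1 hrs.isWeaklyRegular_lTensor

namespace IsProjectiveFlag

variable {d : M →ₗ[S] M} {G : ℕ → Submodule S M} {N : ℕ}

theorem eq_top_of_le (hG : IsProjectiveFlag d G N) {n : ℕ} (hn : N ≤ n) : G n = ⊤ :=
  top_unique (hG.top ▸ monotone_nat_of_le_succ hG.le_succ hn)

theorem projective_quotient (hG : IsProjectiveFlag d G N) (n : ℕ) :
    Module.Projective S (M ⧸ G n) := by
  rcases le_total N n with hn | hn
  · have := Submodule.Quotient.subsingleton_iff.2 (hG.eq_top_of_le hn)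
    infer_instance
  · induction hn using Nat.decreasingInduction with
    | self =>
      have := Submodule.Quotient.subsingleton_iff.2 hG.top
      infer_instance
    | of_succ i hi ih =>
      have := hG.projective i hi
      exact projective_quotient_of_le (hG.le_succ i)

theorem projective_total (hG : IsProjectiveFlag d G N) : Module.Projective S M :=
  have := hG.projective_quotient 0
  .of_equiv (Submodule.quotEquivOfEqBot (G 0) hG.bot)

theorem subsingleton_homology (hG : IsProjectiveFlag d G N) (hd : d ∘ₗ d = 0) {rs : List S}
    (hrs : IsWeaklyRegular S rs)
    (hann : ∀ y ∈ rs, y ∈ Module.annihilator S (Homology d) ^ 2 ^ rs.length)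
    (hN : N ≤ rs.length) : Subsingleton (Homology d) := by
  have := hG.projective_total
  have hproj : ∀ n, ∃ π : M →ₗ[S] M, LinearMap.IsProj (G n) π := fun n =>
    have := hG.projective_quotient n
    exists_isProj_of_projective_quotient (G n)
  choose π hπ using hproj
  have hπ_d (n : ℕ) : π n ∘ₗ d ∘ₗ π (n + 1) = d ∘ₗ π (n + 1) := LinearMap.ext fun x =>
    (hπ n).map_id _ (hG.map_mem n _ ((hπ (n + 1)).map_mem x))
  have hπ_bot : π 0 = 0 := (hπ 0).submodule_eq_bot_iff.1 hG.bot
  have hπ_top : π (0 + rs.length) = LinearMap.id :=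
    (hπ _).submodule_eq_top_iff.1 (hG.eq_top_of_le (by rwa [zero_add]))
  have hker := ker_le_range_sup_range_of_isWeaklyRegular (isWeaklyRegular_of_flat hrs) hd hann
    hπ_d hπ_top
  rwa [hπ_bot, LinearMap.range_zero, bot_sup_eq, ← subsingleton_homology_iff] at hker

end IsProjectiveFlag

end Flag

section Polynomial

variable {R : Type*} [CommRing R]

open scoped Pointwise in
theorem isWeaklyRegular_cons_map_C {p : Polynomial R} (hp : p.Monic) {rs : List R}
    (hrs : IsWeaklyRegular R rs) :
    IsWeaklyRegular (Polynomial R) (p :: rs.map Polynomial.C) := by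
  have hspan : Ideal.span {p} = p • (⊤ : Submodule (Polynomial R) (Polynomial R)) := by
    rw [← Submodule.ideal_span_singleton_smul, smul_eq_mul, Ideal.mul_top]
  have := hp.free_quotient
  have hflat : Module.Flat R (QuotSMulTop p (Polynomial R)) :=
    .of_linearEquiv ((Submodule.quotEquivOfEq _ _ hspan).symm.restrictScalars R)
  refine .cons hp.isRegular.left ?_
  rw [← Polynomial.algebraMap_eq, isWeaklyRegular_map_algebraMap_iff]
  exact isWeaklyRegular_of_flat hrs

theorem isWeaklyRegular_map_ringEquiv_iff {S E : Type*} [CommRing S] [EquivLike E R S]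
    [RingEquivClass E R S] (e : E) {rs : List R} :
    IsWeaklyRegular S (rs.map e) ↔ IsWeaklyRegular R rs :=
  .symm <| (e : R ≃+ S).isWeaklyRegular_congr <| List.forall₂_map_right_iff.2 <|
    List.forall₂_same.2 fun y _ x => map_mul e y x

theorem finSuccEquiv_aeval_X_zero {r : ℕ} (q : Polynomial R) :
    finSuccEquiv R r (Polynomial.aeval (X 0) q) =
      q.map (algebraMap R (MvPolynomial (Fin r) R)) := by
  rw [← Polynomial.aeval_algHom_apply, finSuccEquiv_X_zero, Polynomial.aeval_X_left_eq_map]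

theorem finSuccEquiv_aeval_X_succ {r : ℕ} (j : Fin r) (q : Polynomial R) :
    finSuccEquiv R r (Polynomial.aeval (X j.succ) q) = Polynomial.C (Polynomial.aeval (X j) q) := by
  rw [← Polynomial.aeval_algHom_apply, finSuccEquiv_X_succ]
  exact Polynomial.aeval_algHom_apply Polynomial.CAlgHom _ _

theorem isWeaklyRegular_ofFn_aeval_X {r : ℕ} {p : Fin r → Polynomial R} (hp : ∀ j, (p j).Monic) :
    IsWeaklyRegular (MvPolynomial (Fin r) R)
      (List.ofFn fun j => Polynomial.aeval (X j : MvPolynomial (Fin r) R) (p j)) := by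
  induction r with
  | zero => simp
  | succ r ih =>
    have hreg := isWeaklyRegular_cons_map_C ((hp 0).map (algebraMap R (MvPolynomial (Fin r) R)))
      (ih fun j => hp j.succ)
    rw [← isWeaklyRegular_map_ringEquiv_iff (finSuccEquiv R r)]
    simpa only [List.ofFn_succ, List.map_cons, List.map_ofFn, Function.comp_def,
      finSuccEquiv_aeval_X_zero, finSuccEquiv_aeval_X_succ] using hreg

end Polynomial

theorem exists_monic_aeval_X_mem_annihilator {k σ H : Type*} [CommRing k] [AddCommGroup H]
    [Module (MvPolynomial σ k) H] [Module k H] [IsScalarTower k (MvPolynomial σ k) H]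
    [Module.Finite k H] (j : σ) :
    ∃ p : Polynomial k, p.Monic ∧
      Polynomial.aeval (X j) p ∈ Module.annihilator (MvPolynomial σ k) H := by
  let φ : MvPolynomial σ k →ₐ[k] Module.End k H := Algebra.lsmul k k H
  obtain ⟨p, hp, hp_eval⟩ : IsIntegral k (φ (X j)) := Algebra.IsIntegral.isIntegral _
  refine ⟨p, hp, Module.mem_annihilator.2 fun h => ?_⟩
  have hφ : φ (Polynomial.aeval (X j) p) = 0 := by
    rwa [← Polynomial.aeval_algHom_apply]
  exact LinearMap.congr_fun hφ h

theorem statement_1_general {k : Type*} [CommRing k] {r : ℕ}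
    {F : Type*} [AddCommGroup F] [Module (MvPolynomial (Fin r) k) F]
    [Module k F] [IsScalarTower k (MvPolynomial (Fin r) k) F]
    {d : F →ₗ[MvPolynomial (Fin r) k] F} (hd2 : d ∘ₗ d = 0)
    (hne : Nontrivial (Homology d)) (hfin : Module.Finite k (Homology d))
    {l : ℕ} {G : ℕ → Submodule (MvPolynomial (Fin r) k) F}
    (hG : IsProjectiveFlag d G (l + 1)) :
    r ≤ l := by
  by_contra! hlr
  choose p hp_monic hp_ann using
    exists_monic_aeval_X_mem_annihilator (k := k) (σ := Fin r) (H := Homology d)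
  have hreg := isWeaklyRegular_ofFn_aeval_X fun j => (hp_monic j).pow (2 ^ r)
  refine not_subsingleton (Homology d) (hG.subsingleton_homology hd2 hreg ?_ ?_)
  · simp only [List.forall_mem_ofFn_iff, List.length_ofFn, map_pow]
    exact fun j => Ideal.pow_mem_pow (hp_ann j) _
  · rwa [List.length_ofFn]

/-- If `(F, d)` is a differential module over `S = k[x_1, ..., x_r]` (with `k` algebraically
closed) whose homology `ker d / im d` is nonzero and finite-dimensional over `k`, and `F`
admits a free flag `0 = F^{-1} ⊆ F^0 ⊆ ... ⊆ F^l = F` (with each `F^i / F^{i-1}` free of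
finite rank over `S` and `d (F^i) ⊆ F^{i-1}`), then `l ≥ r`.
Here `G n` plays the role of `F^{n-1}`, so `G 0 = F^{-1} = 0` and `G (l+1) = F^l = F`. -/
theorem statement_1 {k : Type*} [Field k] [IsAlgClosed k] {r : ℕ}
    (F : Type*) [AddCommGroup F] [Module (MvPolynomial (Fin r) k) F]
    [Module k F] [IsScalarTower k (MvPolynomial (Fin r) k) F]
    (d : F →ₗ[MvPolynomial (Fin r) k] F) (hd2 : d ∘ₗ d = 0)
    (hne : Nontrivial
      (↥(LinearMap.ker d) ⧸
        Submodule.comap (LinearMap.ker d).subtype (LinearMap.range d)))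
    (hfin : FiniteDimensional k
      (↥(LinearMap.ker d) ⧸
        Submodule.comap (LinearMap.ker d).subtype (LinearMap.range d)))
    (l : ℕ) (G : ℕ → Submodule (MvPolynomial (Fin r) k) F)
    (hG0 : G 0 = ⊥) (hGtop : G (l + 1) = ⊤)
    (hmono : ∀ i, G i ≤ G (i + 1))
    (hfree : ∀ i ≤ l,
      Module.Free (MvPolynomial (Fin r) k)
        (↥(G (i + 1)) ⧸ Submodule.comap (G (i + 1)).subtype (G i)) ∧
      Module.Finite (MvPolynomial (Fin r) k)
        (↥(G (i + 1)) ⧸ Submodule.comap (G (i + 1)).subtype (G i)))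
    (hd : ∀ i, ∀ x ∈ G (i + 1), d x ∈ G i) :
    l ≥ r :=
  statement_1_general hd2 hne hfin
    ⟨hG0, hGtop, hmono, fun i hi => have := (hfree i (Nat.lt_succ_iff.1 hi)).1; inferInstance, hd⟩
end

section
/- Let k be an algebraically closed field, S = k[x_1,...,x_r] the polynomial ring in r variables each of degree 1, and let R, C be positive integers. Suppose D = (p_{ij}) is an 8×8 matrix with entries in S such that: (1) D is strictly upper triangular; (2) D² = 0; (3) p_{ij}(0,...,0) = 0 for all i, j; (4) for every (a_1,...,a_r) ∈ k^r \ {(0,...,0)}, the evaluated matrix D(a_1,...,a_r) over k has rank 4; (5) there exists a nonincreasing 8-tuple of integers (d_1,...,d_8) such that each p_{ij} is a homogeneous polynomial of degree d_i - d_j + 1; (6) p_{ij} = 0 whenever j ≤ C or i ≥ 9 - R. Then 8 ≥ 2^{r-1}(R + C). -/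
open MvPolynomial

/-- The "standard conditions" on an `8 × 8` matrix `D = (p_{ij})` with entries in
`S = k[x_1, ..., x_r]`:
(1) `D` is strictly upper triangular;
(2) `D² = 0`;
(3) every entry vanishes at the origin;
(4) for every nonzero point `a ∈ k^r` the evaluated matrix `D(a)` has rank `4`;
(5) there is a nonincreasing `8`-tuple of integers `(d_1, ..., d_8)` such that each `p_{ij}`
is homogeneous of degree `d_i - d_j + 1` (the zero polynomial being homogeneous of
any degree). -/
def StandardConditions {k : Type*} [Field k] {r : ℕ}
    (D : Matrix (Fin 8) (Fin 8) (MvPolynomial (Fin r) k)) : Prop :=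
  (∀ i j : Fin 8, j ≤ i → D i j = 0) ∧
  D * D = 0 ∧
  (∀ i j : Fin 8, eval (0 : Fin r → k) (D i j) = 0) ∧
  (∀ a : Fin r → k, a ≠ 0 → (D.map (eval a)).rank = 4) ∧
  (∃ d : Fin 8 → ℤ, Antitone d ∧
    ∀ i j : Fin 8, D i j = 0 ∨
      (0 ≤ d i - d j + 1 ∧ (D i j).IsHomogeneous (d i - d j + 1).toNat))

/-!
Suppose `D` has `C` zero columns and `R` zero rows. Off the origin `D(a)` is exact and, thanks to
the grading, for `r ≥ 2` the zero columns and zero rows can be deleted from a rank count: replacing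
the first `C` rows and the last `R` columns of `D(a)` by zero lowers the rank by `R + C`. Hence
`R + C ≤ 4`. For `r = 1`, exactness alone gives `R, C ≤ 4`.

For `r ≥ 3`, two zero columns and a zero row would leave, after this deletion, a matrix of rank
one, which splits as a column times a row. Then `D = Z * Y` factors through the free module of rank
`4`, and `Z` gives a free resolution of `ker D` so short that, by a Koszul argument in three of the
variables, `D` is exact as a matrix over `S`. This is impossible because `D(0) = 0`. So `C ≤ 1`, and
`R ≤ 1` by duality. The same argument after a change of basis shows that `p₁₂` does not divide
`p₁₃`.

For `r ≥ 4`, it follows that the first row and the last column of `D`, restricted to a few entries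
and divided by their common factors, vanish at the origin, hence have common zeros `a ≠ 0`. At a
suitable such `a` the matrix `D(a)` without its first row and last column has rank at most one, so
`D(a)` has rank at most `3`, a contradiction.
-/

open scoped Matrix

/-! ### Matrices over a field -/

section LinearAlgebra

variable {k m n : Type*} [Field k] [Fintype n]

theorem exists_mul_mul_self_eq (M : Matrix n n k) : ∃ V : Matrix n n k, M * V * M = M := by
  classical
  obtain ⟨P, Q, e, hP, hQ, h⟩ := M.exists_rank_normal_form
  set J : Matrix n n k := (Matrix.fromBlocks 1 0 0 0).submatrix e e
  have hJ : J * J = J := by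
    simp [J, Matrix.submatrix_mul_equiv, Matrix.fromBlocks_multiply]
  refine ⟨Q * J * P, hP.mul_left_cancel (hQ.mul_right_cancel ?_)⟩
  calc P * (M * (Q * J * P) * M) * Q = (P * M * Q) * J * (P * M * Q) := by simp only [mul_assoc]
    _ = P * M * Q := by rw [h, hJ, hJ]

theorem matrix_rank_add_le (A B : Matrix m n k) : (A + B).rank ≤ A.rank + B.rank := by
  have hle : LinearMap.range (A + B).mulVecLin ≤
      LinearMap.range A.mulVecLin ⊔ LinearMap.range B.mulVecLin := by
    rintro _ ⟨v, rfl⟩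
    rw [Matrix.mulVecLin_add]
    exact Submodule.add_mem_sup ⟨v, rfl⟩ ⟨v, rfl⟩
  exact (Submodule.finrank_mono hle).trans (Submodule.finrank_add_le_finrank_add_finrank _ _)

theorem rank_le_one_of_minors_eq [Finite m] {M : Matrix m n k}
    (h : ∀ p q i j, M p i * M q j = M q i * M p j) : M.rank ≤ 1 := by
  by_cases h0 : M = 0
  · simp [h0]
  obtain ⟨p, i, hpi⟩ : ∃ p i, M p i ≠ 0 := by
    by_contra! H
    exact h0 (Matrix.ext H)
  have hM : M = Matrix.vecMulVec (fun q => M q i / M p i) (M p) := by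
    ext q j
    rw [Matrix.vecMulVec_apply, div_mul_eq_mul_div, ← h p q i j, mul_div_cancel_left₀ _ hpi]
  exact hM ▸ Matrix.rank_vecMulVec_le _ _

theorem minors_eq_of_rank_le_one {M : Matrix m n k} (h : M.rank ≤ 1) (p q : m) (i j : n) :
    M p i * M q j = M q i * M p j := by
  by_contra hne
  have hdet : (M.submatrix ![p, q] ![i, j]).det ≠ 0 := by
    rw [Matrix.det_fin_two]
    simpa [sub_eq_zero, mul_comm (M p j)] using hne
  have hrank : (M.submatrix ![p, q] ![i, j]).rank = 2 := Matrix.rank_of_det_ne_zero hdet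
  have hle := M.rank_submatrix_le ![p, q] ![i, j]
  omega

theorem rank_sub_mul_add_rank_le [Fintype m] {E : Matrix m m k} (hE : E * E = E) {M : Matrix m n k}
    {W : Matrix n m k} (hW : M * W = E) : (M - E * M).rank + E.rank ≤ M.rank := by
  classical
  have hsup : LinearMap.range (M - E * M).mulVecLin ⊔ LinearMap.range E.mulVecLin ≤
      LinearMap.range M.mulVecLin := by
    rw [show M - E * M = M * (1 - W * M) by
      rw [Matrix.mul_sub, Matrix.mul_one, ← Matrix.mul_assoc, hW],
      ← hW, Matrix.mulVecLin_mul, Matrix.mulVecLin_mul]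
    exact sup_le (LinearMap.range_comp_le_range _ _) (LinearMap.range_comp_le_range _ _)
  have hinf : LinearMap.range (M - E * M).mulVecLin ⊓ LinearMap.range E.mulVecLin = ⊥ := by
    refine (Submodule.eq_bot_iff _).2 ?_
    rintro _ ⟨⟨u, rfl⟩, v, hv⟩
    simp only [Matrix.mulVecLin_apply] at hv ⊢
    rw [← hv, ← hE, ← Matrix.mulVec_mulVec, hv, Matrix.mulVec_mulVec, Matrix.mul_sub,
      ← Matrix.mul_assoc, hE, sub_self, Matrix.zero_mulVec]
  have hdim := Submodule.finrank_sup_add_finrank_inf_eq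
    (LinearMap.range (M - E * M).mulVecLin) (LinearMap.range E.mulVecLin)
  rw [hinf, finrank_bot, add_zero] at hdim
  exact hdim.symm.trans_le (Submodule.finrank_mono hsup)

theorem rank_le_rank_submatrix_rows {p : Type*} [Finite p] {M : Matrix m n k}
    {f : p → m} (hf : Function.Injective f) (hM : ∀ i ∉ Set.range f, M i = 0) :
    M.rank ≤ (M.submatrix f id).rank := by
  have := Fintype.ofFinite p
  classical
  have hmul : M = (Matrix.of fun i x => if i = f x then (1 : k) else 0) * M.submatrix f id := by
    ext i j
    rw [Matrix.mul_apply]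
    by_cases hi : i ∈ Set.range f
    · obtain ⟨x, rfl⟩ := hi
      simp [hf.eq_iff]
    · have hne : ∀ x, i ≠ f x := fun x hx => hi ⟨x, hx.symm⟩
      simp [hM i hi, hne]
  conv_lhs => rw [hmul]
  exact Matrix.rank_mul_le_right _ _

theorem rank_lt_card_of_mulVec_eq_zero {M : Matrix m n k} {v : n → k} (hv : v ≠ 0)
    (hMv : M *ᵥ v = 0) : M.rank < Fintype.card n := by
  have hdim := M.mulVecLin.finrank_range_add_finrank_ker
  have hker : 0 < Module.finrank k (LinearMap.ker M.mulVecLin) :=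
    Module.finrank_pos_iff_exists_ne_zero.2 ⟨⟨v, hMv⟩, fun h => hv (congrArg Subtype.val h)⟩
  rw [Module.finrank_fintype_fun_eq_card] at hdim
  rw [Matrix.rank]
  omega

theorem rank_le_rank_submatrix {p q : Type*} [Finite p] [Fintype q] {M : Matrix m n k}
    {f : p → m} {g : q → n} (hf : Function.Injective f) (hg : Function.Injective g)
    (hrows : ∀ i ∉ Set.range f, M i = 0) (hcols : ∀ j ∉ Set.range g, Mᵀ j = 0) :
    M.rank ≤ (M.submatrix f g).rank := by
  have := Fintype.ofFinite p
  have h := rank_le_rank_submatrix_rows hg (M := (M.submatrix f id)ᵀ)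
    fun j hj => funext fun i => congrFun (hcols j hj) (f i)
  rw [← Matrix.transpose_submatrix, Matrix.rank_transpose, Matrix.rank_transpose] at h
  exact (rank_le_rank_submatrix_rows hf hrows).trans h

theorem exists_mulVec_eq_of_mul_self_eq_zero {M : Matrix n n k} (h : M * M = 0)
    (hrank : 2 * M.rank = Fintype.card n) {v : n → k} (hv : M *ᵥ v = 0) : ∃ u, M *ᵥ u = v := by
  have hle : LinearMap.range M.mulVecLin ≤ LinearMap.ker M.mulVecLin :=
    LinearMap.range_le_ker_iff.2 (by rw [← Matrix.mulVecLin_mul, h, Matrix.mulVecLin_zero])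
  have hdim := M.mulVecLin.finrank_range_add_finrank_ker
  rw [Module.finrank_fintype_fun_eq_card] at hdim
  have heq := Submodule.eq_of_le_of_finrank_le hle (by rw [Matrix.rank] at hrank; omega)
  exact heq.ge hv

theorem mulVec_injective_of_rank_mul_eq_card [Fintype m] {Z : Matrix m n k} {Y : Matrix n m k}
    (h : (Z * Y).rank = Fintype.card n) : Function.Injective Z.mulVec := by
  have hdim := Z.mulVecLin.finrank_range_add_finrank_ker
  have hle : Fintype.card n ≤ Z.rank := h.symm.trans_le (Matrix.rank_mul_le_left Z Y)
  rw [Module.finrank_fintype_fun_eq_card, ← Matrix.rank] at hdim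
  exact LinearMap.ker_eq_bot.1 (Submodule.finrank_eq_zero.1 (by omega) : Z.mulVecLin.ker = ⊥)

theorem mulVec_surjective_of_rank_mul_eq_card [Fintype m] {Z : Matrix m n k} {Y : Matrix n m k}
    (h : (Z * Y).rank = Fintype.card n) : Function.Surjective Y.mulVec := by
  have hle : Fintype.card n ≤ Y.rank := h.symm.trans_le (Matrix.rank_mul_le_right Z Y)
  have htop : LinearMap.range Y.mulVecLin = ⊤ := Submodule.eq_top_of_finrank_eq <| by
    rw [Module.finrank_fintype_fun_eq_card]
    exact (Matrix.rank_le_card_height Y).antisymm hle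
  exact LinearMap.range_eq_top.1 htop

theorem exists_isUnit_mul_add_mul [DecidableEq n] {M : Matrix n n k} (h : M * M = 0)
    (hrank : 2 * M.rank = Fintype.card n) : ∃ V, IsUnit (M * V + V * M) := by
  obtain ⟨V, hV⟩ := exists_mul_mul_self_eq M
  refine ⟨V, Matrix.mulVec_injective_iff_isUnit.1 <|
    (injective_iff_map_eq_zero (M * V + V * M).mulVecLin).2 fun v hv => ?_⟩
  rw [Matrix.mulVecLin_apply] at hv
  have hMv : M *ᵥ v = 0 := by
    calc M *ᵥ v = M *ᵥ ((M * V + V * M) *ᵥ v) := by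
          rw [Matrix.mulVec_mulVec, mul_add, ← mul_assoc, ← mul_assoc, h, zero_mul, zero_add, hV]
      _ = 0 := by rw [hv, Matrix.mulVec_zero]
  obtain ⟨u, rfl⟩ := exists_mulVec_eq_of_mul_self_eq_zero h hrank hMv
  rwa [Matrix.mulVec_mulVec, add_mul, hV, mul_assoc, h, mul_zero, add_zero] at hv

variable [DecidableEq m] [DecidableEq n]

/-- `zeroOut s t M` is the matrix `M` with its rows in `s` and its columns in `t` replaced
by zero. -/
def zeroOut {α : Type*} [Zero α] (s : Finset m) (t : Finset n) (M : Matrix m n α) : Matrix m n α :=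
  Matrix.of fun i j => if i ∈ s ∨ j ∈ t then 0 else M i j

theorem rank_le_rank_zeroOut_add [Finite m] (s : Finset m) (t : Finset n) (M : Matrix m n k) :
    M.rank ≤ (zeroOut s t M).rank + s.card + t.card := by
  have := Fintype.ofFinite m
  set rows : Matrix m n k := Matrix.of fun i j => if i ∈ s then M i j else 0
  set cols : Matrix m n k := Matrix.of fun i j => if i ∉ s ∧ j ∈ t then M i j else 0
  have hM : M = zeroOut s t M + rows + cols := by
    ext i j
    by_cases i ∈ s <;> by_cases j ∈ t <;> simp [zeroOut, rows, cols, *]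
  have hrows : rows.rank ≤ s.card := rows.rank_le_card_of_support_subset s <|
    Function.support_subset_iff'.2 fun i hi => funext fun j => if_neg hi
  have hcols : cols.rank ≤ t.card := by
    rw [← Matrix.rank_transpose]
    exact colsᵀ.rank_le_card_of_support_subset t <|
      Function.support_subset_iff'.2 fun j hj => funext fun i => if_neg fun h => hj h.2
  calc M.rank = (zeroOut s t M + rows + cols).rank := by rw [← hM]
    _ ≤ (zeroOut s t M).rank + rows.rank + cols.rank :=
      (matrix_rank_add_le _ _).trans (Nat.add_le_add_right (matrix_rank_add_le _ _) _)
    _ ≤ _ := by omega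

theorem rank_zeroOut_rows_add_card_le [Finite m] {s : Finset m} {M : Matrix m n k}
    (hs : ∀ i ∈ s, ∃ w, M *ᵥ w = Pi.single i 1) : (zeroOut s ∅ M).rank + s.card ≤ M.rank := by
  classical
  have := Fintype.ofFinite m
  choose! w hw using hs
  set E : Matrix m m k := Matrix.diagonal fun i => if i ∈ s then 1 else 0
  have hMW : M * (Matrix.of fun j i => if i ∈ s then w i j else 0) = E := by
    ext i j
    by_cases hj : j ∈ s
    · have hij := congrFun (hw j hj) i
      by_cases h : i = j <;>
        simp_all [Matrix.mul_apply, Matrix.mulVec, dotProduct, E]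
    · simp +contextual [Matrix.mul_apply, E, hj, Matrix.diagonal_apply]
  have hout : zeroOut s ∅ M = M - E * M := by
    ext i j
    by_cases hi : i ∈ s <;> simp [zeroOut, E, Matrix.diagonal_mul, hi]
  have hE : E.rank = s.card := by simp [E, Matrix.rank_diagonal, Fintype.card_subtype]
  have hEE : E * E = E := by simp [E, Matrix.diagonal_mul_diagonal]
  rw [hout, ← hE]
  exact rank_sub_mul_add_rank_le hEE hMW

theorem rank_zeroOut_add_card_le [Fintype m] {s : Finset m} {t : Finset n} {M : Matrix m n k}
    (hs : ∀ i ∈ s, ∃ w, M *ᵥ w = Pi.single i 1 ∧ ∀ j ∈ t, w j = 0)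
    (ht : ∀ j ∈ t, ∃ w, Mᵀ *ᵥ w = Pi.single j 1) :
    (zeroOut s t M).rank + s.card + t.card ≤ M.rank := by
  have hcols : (zeroOut ∅ t M).rank + t.card ≤ M.rank := by
    have h := rank_zeroOut_rows_add_card_le ht
    rwa [show zeroOut t ∅ Mᵀ = (zeroOut ∅ t M)ᵀ by ext; simp [zeroOut], Matrix.rank_transpose,
      Matrix.rank_transpose] at h
  have hrows : (zeroOut s ∅ (zeroOut ∅ t M)).rank + s.card ≤ (zeroOut ∅ t M).rank := by
    refine rank_zeroOut_rows_add_card_le fun i hi => ?_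
    obtain ⟨w, hw, hwt⟩ := hs i hi
    refine ⟨w, hw ▸ funext fun i => Finset.sum_congr rfl fun j _ => ?_⟩
    by_cases hj : j ∈ t <;> simp [zeroOut, hj, hwt]
  rw [show zeroOut s ∅ (zeroOut ∅ t M) = zeroOut s t M by ext; simp [zeroOut, ite_or]] at hrows
  omega

end LinearAlgebra

theorem exists_eq_mul_of_zeroOut_eq_vecMulVec {A m n : Type*} [CommRing A] [DecidableEq m]
    [DecidableEq n] {s : Finset m} {t : Finset n} {M : Matrix m n A} {v : m → A} {w : n → A}
    (h : zeroOut s t M = Matrix.vecMulVec v w) :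
    ∃ (Z : Matrix m (s ⊕ t ⊕ Unit) A) (Y : Matrix (s ⊕ t ⊕ Unit) n A), M = Z * Y := by
  refine ⟨Matrix.of fun i => Sum.elim (fun a => if i = a then 1 else 0)
      (Sum.elim (fun b => if i ∈ s then 0 else M i b) fun _ => v i),
    Matrix.of fun c j => Sum.elim (fun a : s => M a j)
      (Sum.elim (fun b : t => if j = b then 1 else 0) fun _ => w j) c, Matrix.ext fun i j => ?_⟩
  have hij : zeroOut s t M i j = v i * w j := congrFun₂ h i j
  have hrows : ∀ f : m → A, ∑ a : s, (if i = a then 1 else 0) * f a = if i ∈ s then f i else 0 :=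
    fun f => by
      rw [Finset.sum_coe_sort s fun a => (if i = a then 1 else 0) * f a]
      simp
  have hcols : ∀ f : n → A, ∑ b : t, f b * (if j = b then 1 else 0) = if j ∈ t then f j else 0 :=
    fun f => by
      rw [Finset.sum_coe_sort t fun b => f b * (if j = b then 1 else 0)]
      simp
  simp only [Matrix.mul_apply, Matrix.of_apply, Fintype.sum_sum_type, Sum.elim_inl, Sum.elim_inr,
    Finset.univ_unique, Finset.sum_singleton, ← hij, hrows (M · j),
    hcols fun b => if i ∈ s then 0 else M i b]
  by_cases hi : i ∈ s <;> by_cases hj : j ∈ t <;> simp [zeroOut, hi, hj]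

theorem commute_adjugate {n A : Type*} [Fintype n] [DecidableEq n] [CommRing A] [IsDomain A]
    {M N : Matrix n n A} (hN : N.det ≠ 0) (h : Commute M N) : Commute M N.adjugate := by
  have hmul : N.det • (M * N.adjugate) = N.det • (N.adjugate * M) := by
    calc N.det • (M * N.adjugate) = N.adjugate * (N * M) * N.adjugate := by
          rw [← mul_assoc, Matrix.adjugate_mul, Matrix.smul_mul, one_mul, Matrix.smul_mul]
      _ = N.adjugate * M * (N * N.adjugate) := by rw [← h.eq]; simp only [mul_assoc]
      _ = N.det • (N.adjugate * M) := by rw [Matrix.mul_adjugate, Matrix.mul_smul, mul_one]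
  exact smul_right_injective _ hN hmul

/-! ### Regular sequences and primitive vectors -/

section Depth

variable {A ι κ : Type*} [CommRing A]

theorem exists_eq_smul_of_smul_eq_smul {x y : A} (hxy : ∀ f, x ∣ y * f → x ∣ f) {u v : ι → A}
    (h : y • u = x • v) : ∃ q, u = x • q := by
  choose q hq using fun i => hxy (u i) ⟨v i, congrFun h i⟩
  exact ⟨q, funext hq⟩

theorem exists_mulVec_eq_of_smul_pair [IsDomain A] [Fintype κ] {x y : A} (hx : x ≠ 0)
    (hxy : ∀ f, x ∣ y * f → x ∣ f) {Z : Matrix ι κ A}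
    (hZ : Function.Injective Z.mulVec) {z : ι → A} {p q : κ → A} (hp : Z *ᵥ p = x • z)
    (hq : Z *ᵥ q = y • z) : ∃ c, Z *ᵥ c = z := by
  obtain ⟨c, rfl⟩ := exists_eq_smul_of_smul_eq_smul hxy (u := p) (v := q) <| hZ <| by
    rw [Matrix.mulVec_smul, Matrix.mulVec_smul, hp, hq, smul_comm]
  exact ⟨c, smul_right_injective _ hx (by simpa only [Matrix.mulVec_smul] using hp)⟩

theorem exists_mulVec_eq_of_smul_triple [IsDomain A] [Fintype ι] [Fintype κ] {x y w : A}
    (hx : x ≠ 0) (hxy : ∀ f, x ∣ y * f → x ∣ f)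
    (hxyw : ∀ f, w * f ∈ Ideal.span {x, y} → f ∈ Ideal.span {x, y})
    {D : Matrix ι ι A} {Z : Matrix ι κ A} (hZ : Function.Injective Z.mulVec) (hDZ : D * Z = 0)
    (hker : ∀ v, D *ᵥ v = 0 → ∃ c, Z *ᵥ c = v) {z p q s : ι → A}
    (hp : D *ᵥ p = x • z) (hq : D *ᵥ q = y • z) (hs : D *ᵥ s = w • z) : ∃ v, D *ᵥ v = z := by
  have hkoszul : ∀ {a b : A} {f g : ι → A}, D *ᵥ f = a • z → D *ᵥ g = b • z →
      ∃ c, Z *ᵥ c = b • f - a • g := fun hf hg => hker _ <| by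
    rw [Matrix.mulVec_sub, Matrix.mulVec_smul, Matrix.mulVec_smul, hf, hg, smul_comm, sub_self]
  obtain ⟨α, hα⟩ := hkoszul hp hq
  obtain ⟨α', hα'⟩ := hkoszul hp hs
  obtain ⟨α'', hα''⟩ := hkoszul hq hs
  have hcocycle : w • α = y • α' - x • α'' := hZ <| by
    simp only [Matrix.mulVec_sub, Matrix.mulVec_smul, hα, hα', hα'']
    module
  have hα_mem : ∀ j, ∃ β γ, α j = y * β - x * γ := fun j => by
    have hmem : w * α j ∈ Ideal.span {x, y} :=
      Ideal.mem_span_pair.2 ⟨-α'' j, α' j, by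
        have := congrFun hcocycle j
        simp only [Pi.smul_apply, Pi.sub_apply, smul_eq_mul] at this
        rw [this]; ring⟩
    obtain ⟨γ, β, h⟩ := Ideal.mem_span_pair.1 (hxyw _ hmem)
    exact ⟨β, -γ, by rw [← h]; ring⟩
  choose β γ hβγ using hα_mem
  obtain rfl : α = y • β - x • γ := funext hβγ
  obtain ⟨v, hv⟩ := exists_eq_smul_of_smul_eq_smul hxy (u := p - Z *ᵥ β) (v := q - Z *ᵥ γ) <| by
    rw [Matrix.mulVec_sub, Matrix.mulVec_smul, Matrix.mulVec_smul] at hα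
    linear_combination (norm := module) -hα
  refine ⟨v, smul_right_injective _ hx ?_⟩
  simp only
  rw [← Matrix.mulVec_smul, ← hv, Matrix.mulVec_sub, Matrix.mulVec_mulVec, hDZ,
    Matrix.zero_mulVec, sub_zero, hp]

end Depth

section Primitive

variable {A ι κ : Type*} [CommRing A]

/-- A vector `w` is primitive if every vector proportional to it, in the sense that all the
`2 × 2` minors of the pair vanish, is a multiple of it. Over a factorial ring this says that the
entries of `w` have no common factor. -/
def IsPrimitive (w : ι → A) : Prop :=
  ∀ y : ι → A, (∀ i j, y i * w j = y j * w i) → ∃ t : A, y = t • w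

theorem exists_eq_smul_isPrimitive [IsDomain A] [UniqueFactorizationMonoid A] [Finite ι]
    {f : ι → A} (hf : f ≠ 0) : ∃ (g : A) (w : ι → A), f = g • w ∧ IsPrimitive w := by
  classical
  have := Fintype.ofFinite ι
  obtain ⟨i₀, hi₀⟩ := Function.ne_iff.mp hf
  let _ : StrongNormalizationMonoid A := UniqueFactorizationMonoid.strongNormalizationMonoid
  let _ : NormalizedGCDMonoid A := UniqueFactorizationMonoid.toNormalizedGCDMonoid A
  obtain ⟨w, hw, hgcd⟩ := Finset.extract_gcd f ⟨i₀, Finset.mem_univ i₀⟩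
  have hw₀ : w i₀ ≠ 0 := right_ne_zero_of_mul ((hw i₀ (Finset.mem_univ _)).symm.trans_ne hi₀)
  refine ⟨Finset.univ.gcd f, w, funext fun i => hw i (Finset.mem_univ i), fun y hy => ?_⟩
  have hdvd : w i₀ ∣ Finset.univ.gcd fun i => y i₀ * w i :=
    Finset.dvd_gcd fun i _ => Dvd.intro_left _ (hy i i₀)
  rw [(Finset.gcd_mul_left' Finset.univ w (y i₀)).dvd_iff_dvd_right, hgcd, mul_one] at hdvd
  obtain ⟨t, ht⟩ := hdvd
  refine ⟨t, funext fun i => mul_right_cancel₀ hw₀ ?_⟩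
  rw [hy i i₀, ht, Pi.smul_apply, smul_eq_mul]
  ring

theorem exists_eq_vecMulVec_of_minors_eq [IsDomain A] [UniqueFactorizationMonoid A] [Finite ι]
    {M : Matrix κ ι A} (h : ∀ p q i j, M p i * M q j = M q i * M p j) :
    ∃ v w, M = Matrix.vecMulVec v w := by
  by_cases hM : M = 0
  · exact ⟨0, 0, by rw [hM, Matrix.zero_vecMulVec]⟩
  obtain ⟨q, hq⟩ := Function.ne_iff.1 hM
  obtain ⟨g, w, hgw, hw⟩ := exists_eq_smul_isPrimitive hq
  have hg : g ≠ 0 := fun hg => hq (by rw [hgw, hg, zero_smul]; rfl)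
  choose v hv using fun p => hw (M p) fun i j => mul_left_cancel₀ hg <| by
    have hij := h p q i j
    rw [congrFun hgw i, congrFun hgw j, Pi.smul_apply, Pi.smul_apply, smul_eq_mul,
      smul_eq_mul] at hij
    linear_combination hij
  exact ⟨v, w, funext hv⟩

end Primitive

theorem IsPrimitive.exists_eq_smul_of_dotProduct_eq_zero {A : Type*} [CommRing A]
    {w v : Fin 2 → A} (hw : IsPrimitive w) (h : w ⬝ᵥ v = 0) : ∃ t : A, v = t • ![-w 1, w 0] := by
  rw [Matrix.vec2_dotProduct] at h
  obtain ⟨t, ht⟩ := hw ![v 1, -v 0] <| by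
    simp only [Fin.forall_fin_two, Matrix.cons_val_zero, Matrix.cons_val_one, true_and, and_true]
    constructor
    · linear_combination h
    · linear_combination -h
  have h0 : v 1 = t * w 0 := congrFun ht 0
  have h1 : -v 0 = t * w 1 := congrFun ht 1
  refine ⟨t, funext <| Fin.forall_fin_two.2 ⟨?_, h0⟩⟩
  simp [← h1]

theorem IsPrimitive.exists_crossProduct_eq_smul {A : Type*} [CommRing A] {w u v : Fin 3 → A}
    (hw : IsPrimitive w) (hu : w ⬝ᵥ u = 0) (hv : w ⬝ᵥ v = 0) :
    ∃ t : A, u ⨯₃ v = t • w := by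
  rw [Matrix.vec3_dotProduct] at hu hv
  refine hw _ fun i j => ?_
  rw [cross_apply]
  fin_cases i <;> fin_cases j <;>
    simp only [Fin.zero_eta, Fin.mk_one, Fin.reduceFinMk, Matrix.cons_val_zero, Matrix.cons_val_one,
      Matrix.cons_val] <;> grind

/-! ### Polynomial rings -/

section Polynomials

variable {σ k : Type*} [Field k]

theorem mem_span_X_pow_of_X_pow_mul_mem {T : Set σ} {t : σ} (ht : t ∉ T) {m n : ℕ}
    {f : MvPolynomial σ k}
    (h : X t ^ n * f ∈ Ideal.span ((fun s => (X s : MvPolynomial σ k) ^ m) '' T)) :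
    f ∈ Ideal.span ((fun s => (X s : MvPolynomial σ k) ^ m) '' T) := by
  have hT : (fun s => (X s : MvPolynomial σ k) ^ m) '' T =
      (fun e => monomial e (1 : k)) '' ((fun s => Finsupp.single s m) '' T) := by
    simp only [Set.image_image, X_pow_eq_monomial]
  rw [hT, mem_ideal_span_monomial_image] at h ⊢
  intro e he
  obtain ⟨_, ⟨s, hs, rfl⟩, hle⟩ := h (Finsupp.single t n + e) (by
    rw [mem_support_iff, X_pow_eq_monomial, coeff_monomial_mul, one_mul]
    exact mem_support_iff.mp he)
  refine ⟨_, ⟨s, hs, rfl⟩, ?_⟩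
  have hst : s ≠ t := fun hst => ht (hst ▸ hs)
  simpa [Finsupp.single_le_iff, hst.symm, hst] using hle

theorem X_pow_dvd_of_X_pow_dvd_mul {s t : σ} (hst : s ≠ t) {m n : ℕ} {f : MvPolynomial σ k}
    (h : X s ^ m ∣ X t ^ n * f) : X s ^ m ∣ f := by
  have := mem_span_X_pow_of_X_pow_mul_mem (T := {s}) (t := t) (m := m) (n := n) (f := f)
    (by simpa using hst.symm)
  simp only [Set.image_singleton, Ideal.mem_span_singleton] at this
  exact this h

theorem isHomogeneous_left_of_mul {p q : MvPolynomial σ k} {n : ℕ} (h : (p * q).IsHomogeneous n)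
    (h0 : p * q ≠ 0) : p.IsHomogeneous p.totalDegree := by
  have hbounds : ∀ {f : MvPolynomial σ k} {d}, coeff d f ≠ 0 →
      (f : MvPowerSeries σ k).order ≤ d.degree ∧ d.degree ≤ f.totalDegree := fun hd =>
    ⟨MvPowerSeries.order_le (by rwa [coeff_coe]), le_totalDegree (mem_support_iff.2 hd)⟩
  have hdeg : p.totalDegree + q.totalDegree = n := by
    rw [← totalDegree_mul_of_isDomain (left_ne_zero_of_mul h0) (right_ne_zero_of_mul h0),
      h.totalDegree h0]
  have horder : (n : ℕ∞) ≤ (p : MvPowerSeries σ k).order + (q : MvPowerSeries σ k).order := by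
    rw [← MvPowerSeries.order_mul, ← coe_mul]
    refine MvPowerSeries.nat_le_order fun d hd => ?_
    rw [coeff_coe]
    exact h.coeff_eq_zero hd.ne
  obtain ⟨e, he⟩ := ne_zero_iff.1 (right_ne_zero_of_mul h0)
  intro d hd
  obtain ⟨hpo, hpd⟩ := hbounds hd
  obtain ⟨hqo, hqd⟩ := hbounds he
  have hn : n ≤ d.degree + e.degree := by exact_mod_cast horder.trans (add_le_add hpo hqo)
  refine (DFunLike.congr_fun Finsupp.degree_eq_weight_one d).symm.trans ?_
  omega

theorem eq_zero_of_forall_eval_eq_zero [Infinite k] [Nonempty σ] {f : MvPolynomial σ k}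
    (h : ∀ a : σ → k, a ≠ 0 → eval a f = 0) : f = 0 := by
  have hX : f * X (Classical.arbitrary σ) = 0 := by
    refine MvPolynomial.funext fun a => ?_
    by_cases ha : a = 0
    · simp [ha]
    · simp [h a ha]
  exact (mul_eq_zero.mp hX).resolve_right (X_ne_zero _)

theorem exists_forall_X_pow_mem [IsAlgClosed k] [Finite σ] {I : Ideal (MvPolynomial σ k)}
    (h : ∀ a : σ → k, a ≠ 0 → ∃ f ∈ I, eval a f ≠ 0) : ∃ m, ∀ s, X s ^ m ∈ I := by
  have hX : ∀ s, X s ∈ I.radical := by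
    intro s
    rw [← vanishingIdeal_zeroLocus_eq_radical (K := k), mem_vanishingIdeal_iff]
    intro a ha
    obtain rfl : a = 0 := by
      by_contra ha0
      obtain ⟨f, hf, hfa⟩ := h a ha0
      exact hfa (by simpa [aeval_eq_eval] using mem_zeroLocus_iff.1 ha f hf)
    simp
  have := Fintype.ofFinite σ
  choose n hn using hX
  exact ⟨∑ s, n s, fun s => I.pow_mem_of_pow_mem (hn s)
    (Finset.single_le_sum (fun _ _ => Nat.zero_le _) (Finset.mem_univ s))⟩

theorem ker_eval_zero_le {Q : Ideal (MvPolynomial σ k)} (hQ : ∀ s, X s ∈ Q) :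
    RingHom.ker (eval (0 : σ → k)) ≤ Q := by
  intro p hp
  have hcomp : Ideal.Quotient.mkₐ k Q = (Algebra.ofId k _).comp (aeval (0 : σ → k)) :=
    algHom_ext fun s => by
      simpa using Ideal.Quotient.eq_zero_iff_mem.mpr (hQ s)
  have h := DFunLike.congr_fun hcomp p
  rw [AlgHom.comp_apply, aeval_eq_eval, RingHom.mem_ker.1 hp, map_zero] at h
  exact Ideal.Quotient.eq_zero_iff_mem.mp h

theorem card_le_height_ker_eval_zero (T : Finset σ) :
    (T.card : ℕ∞) ≤ (RingHom.ker (eval (0 : σ → k))).height := by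
  classical
  set φ : Finset σ → MvPolynomial σ k →ₐ[k] MvPolynomial σ k := fun T =>
    aeval fun s => if s ∈ T then 0 else X s
  have hker : ∀ T T' : Finset σ, T ⊆ T' → ∀ f, φ T f = 0 → φ T' f = 0 := fun T T' hT f hf => by
    have hcomp : (φ T').comp (φ T) = φ T' := algHom_ext fun s => by
      by_cases hs : s ∈ T
      · simp [φ, hs, hT hs]
      · simp [φ, hs]
    rw [← hcomp, AlgHom.comp_apply, hf, map_zero]
  have hprime : ∀ T, (RingHom.ker (φ T)).IsPrime := fun T => RingHom.ker_isPrime _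
  have hheight : (T.card : ℕ∞) ≤ (RingHom.ker (φ T)).height := by
    induction T using Finset.induction with
    | empty => simp
    | insert s T hs ih =>
      have hlt : RingHom.ker (φ T) < RingHom.ker (φ (insert s T)) :=
        SetLike.lt_iff_le_and_exists.2 ⟨fun f => hker _ _ (Finset.subset_insert s T) f, X s,
          by simp [φ, RingHom.mem_ker], by simp [φ, RingHom.mem_ker, hs, X_ne_zero]⟩
      rw [Finset.card_insert_of_notMem hs, Nat.cast_add_one]
      exact (add_le_add_left ih 1).trans (Ideal.height_add_one_le_of_lt_of_isPrime hlt)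
  refine hheight.trans (Ideal.height_mono fun f hf => ?_)
  have hcomp : (aeval (0 : σ → k)).comp (φ T) = aeval 0 := algHom_ext fun s => by
    by_cases hs : s ∈ T <;> simp [φ, hs]
  rw [RingHom.mem_ker, ← aeval_eq_eval, ← hcomp, AlgHom.comp_apply, RingHom.mem_ker.1 hf, map_zero]

theorem exists_ne_zero_forall_eval_eq_zero [IsAlgClosed k] [Finite σ] {n : ℕ}
    (hn : n < Nat.card σ) (f : Fin n → MvPolynomial σ k) (hf : ∀ i, eval 0 (f i) = 0) :
    ∃ a : σ → k, a ≠ 0 ∧ ∀ i, eval a (f i) = 0 := by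
  classical
  have := Fintype.ofFinite σ
  set P := RingHom.ker (eval (0 : σ → k))
  have hP : P.IsPrime := RingHom.ker_isPrime _
  by_contra! H
  obtain ⟨m, hm⟩ := exists_forall_X_pow_mem (I := Ideal.span (Set.range f)) fun a ha =>
    let ⟨i, hi⟩ := H a ha
    ⟨f i, Ideal.subset_span ⟨i, rfl⟩, hi⟩
  have hmin : P ∈ (Ideal.span (Finset.univ.image f : Set (MvPolynomial σ k))).minimalPrimes := by
    rw [Finset.coe_image, Finset.coe_univ, Set.image_univ]
    refine ⟨⟨hP, Ideal.span_le.2 (Set.range_subset_iff.2 hf)⟩, fun Q ⟨hQ, hle⟩ _ => ?_⟩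
    exact ker_eval_zero_le fun s => hQ.mem_of_pow_mem m (hle (hm s))
  have hcard : (Nat.card σ : ℕ∞) ≤ n := by
    rw [Nat.card_eq_fintype_card]
    calc (Fintype.card σ : ℕ∞) ≤ P.height := card_le_height_ker_eval_zero Finset.univ
      _ ≤ (Finset.univ.image f).card := Ideal.height_le_card_of_mem_minimalPrimes_span_finset hmin
      _ ≤ n := by exact_mod_cast Finset.card_image_le.trans_eq (Finset.card_fin n)
  exact absurd (Nat.cast_le.1 hcard) hn.not_ge

theorem eq_zero_of_isHomogeneous_of_eval_ne_zero {f : MvPolynomial σ k} {n : ℕ}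
    (hf : f.IsHomogeneous n) (h : eval 0 f ≠ 0) : n = 0 := by
  rw [eval_zero, constantCoeff_eq] at h
  by_contra hn
  exact h (hf.coeff_eq_zero (by rwa [map_zero, ne_comm]))

end Polynomials

/-! ### Graded matrices -/

section Grading

variable {σ k ι : Type*} [Field k]

/-- `IsIntHomogeneous p n` says that `p` is homogeneous of degree `n`. The degree is an integer so
that degrees can be subtracted freely; only `0` has a negative degree. -/
abbrev IsIntHomogeneous (p : MvPolynomial σ k) (n : ℤ) : Prop :=
  IsWeightedHomogeneous (fun _ => (1 : ℤ)) p n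

theorem isIntHomogeneous_natCast_iff {p : MvPolynomial σ k} {n : ℕ} :
    IsIntHomogeneous p n ↔ p.IsHomogeneous n := by
  have hweight : ∀ d : σ →₀ ℕ,
      Finsupp.weight (fun _ : σ => (1 : ℤ)) d = (Finsupp.weight (1 : σ → ℕ) d : ℤ) := fun d => by
    simp [Finsupp.weight_apply, Finsupp.sum]
  simp only [IsHomogeneous, IsWeightedHomogeneous, hweight, Nat.cast_inj]

theorem IsIntHomogeneous.exists_natCast_eq {p : MvPolynomial σ k} {n : ℤ}
    (h : IsIntHomogeneous p n) (hp : p ≠ 0) : ∃ m : ℕ, n = m ∧ p.IsHomogeneous m := by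
  obtain ⟨d, hd⟩ := ne_zero_iff.1 hp
  have hn : n = (d.sum fun _ e => e : ℕ) := by
    rw [← h hd]
    simp [Finsupp.weight_apply, Finsupp.sum]
  exact ⟨_, hn, isIntHomogeneous_natCast_iff.1 (hn ▸ h)⟩

theorem IsIntHomogeneous.eq_zero_of_X_pow_dvd {p : MvPolynomial σ k} {n : ℤ} {s : σ} {m : ℕ}
    (h : IsIntHomogeneous p n) (hn : n < m) (hdvd : X s ^ m ∣ p) : p = 0 := by
  by_contra hp
  obtain ⟨n, rfl, hhom⟩ := h.exists_natCast_eq hp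
  have hle := totalDegree_le_of_dvd_of_isDomain hdvd hp
  rw [totalDegree_X_pow, hhom.totalDegree hp] at hle
  omega

theorem weightedHomogeneousComponent_mul_of_left {M : Type*} [AddCancelCommMonoid M] {w : σ → M}
    {p : MvPolynomial σ k} {m : M} (hp : IsWeightedHomogeneous w p m) (n : M)
    (f : MvPolynomial σ k) : weightedHomogeneousComponent w (m + n) (p * f) =
      p * weightedHomogeneousComponent w n f := by
  classical
  let _ := weightedGradedAlgebra k w
  have hcomponent : ∀ g i, (DirectSum.decompose (weightedHomogeneousSubmodule k w) g i : _) =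
      weightedHomogeneousComponent w i g := weightedDecomposition.decompose'_apply k w
  rw [← hcomponent, ← hcomponent]
  exact DirectSum.coe_decompose_mul_add_of_left_mem (weightedHomogeneousSubmodule k w)
    ((mem_weightedHomogeneousSubmodule k w m p).2 hp)

/-- A matrix with `IsGraded d e M` is a homogeneous map of degree `e` between graded free modules
whose `i`-th generator has degree `-d i`. -/
def IsGraded (d : ι → ℤ) (e : ℤ) (M : Matrix ι ι (MvPolynomial σ k)) : Prop :=
  ∀ i j, IsIntHomogeneous (M i j) (d i - d j + e)

theorem IsGraded.mul [Fintype ι] {d : ι → ℤ} {e e' : ℤ} {M N : Matrix ι ι (MvPolynomial σ k)}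
    (hM : IsGraded d e M) (hN : IsGraded d e' N) : IsGraded d (e + e') (M * N) := fun i j =>
  .sum _ _ _ fun l _ => by
    convert (hM i l).mul (hN l j) using 1
    ring

theorem IsGraded.transpose {d : ι → ℤ} {e : ℤ} {M : Matrix ι ι (MvPolynomial σ k)}
    (hM : IsGraded d e M) : IsGraded (-d) e Mᵀ := fun i j => by
  have hdeg : (-d) i - (-d) j + e = d j - d i + e := by
    rw [Pi.neg_apply, Pi.neg_apply]
    ring
  exact hdeg ▸ hM j i

theorem IsGraded.exists_mulVec_eq_isIntHomogeneous [Fintype ι] {d : ι → ℤ} {e n : ℤ}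
    {M : Matrix ι ι (MvPolynomial σ k)} (hM : IsGraded d e M) {z u : ι → MvPolynomial σ k}
    (hz : ∀ i, IsIntHomogeneous (z i) (n + d i)) (hu : M *ᵥ u = z) :
    ∃ v, M *ᵥ v = z ∧ ∀ i, IsIntHomogeneous (v i) (n + d i - e) := by
  refine ⟨fun i => weightedHomogeneousComponent (fun _ => 1) (n + d i - e) (u i),
    funext fun i => ?_, fun i => weightedHomogeneousComponent_isWeightedHomogeneous _ _⟩
  have hterm : ∀ j, M i j * weightedHomogeneousComponent (fun _ => 1) (n + d j - e) (u j) =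
      weightedHomogeneousComponent (fun _ => 1) (n + d i) (M i j * u j) := fun j => by
    rw [← weightedHomogeneousComponent_mul_of_left (hM i j)]
    congr 2
    ring
  rw [← weightedHomogeneousComponent_eq_self (hz i), ← hu]
  simp only [Matrix.mulVec, dotProduct, hterm, map_sum]

theorem isGraded_transvection [DecidableEq ι] {d : ι → ℤ} {p q : ι}
    (hpq : p ≠ q) {c : MvPolynomial σ k} (hc : IsIntHomogeneous c (d p - d q)) :
    IsGraded d 0 (Matrix.transvection p q c) := fun i j => by
  rw [add_zero]
  obtain rfl | hij := eq_or_ne i j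
  · have hone : Matrix.transvection p q c i i = 1 := by
      simp only [Matrix.transvection, Matrix.add_apply, Matrix.one_apply_eq, add_eq_left]
      exact Matrix.single_apply_of_ne _ _ _ _ _ fun h => hpq (h.1.trans h.2.symm)
    rw [hone, sub_self]
    exact isWeightedHomogeneous_one k _
  · rw [Matrix.transvection, Matrix.add_apply, Matrix.one_apply_ne hij, zero_add,
      Matrix.single_apply]
    split_ifs with h
    · exact h.1 ▸ h.2 ▸ hc
    · exact isWeightedHomogeneous_zero k _ _

theorem IsGraded.exists_isIntHomogeneous_col_eq_smul_col {d : ι → ℤ}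
    {e : ℤ} {M : Matrix ι ι (MvPolynomial σ k)} (hM : IsGraded d e M) {p q : ι}
    {c : MvPolynomial σ k} (hc : Mᵀ q = c • Mᵀ p) :
    ∃ c' : MvPolynomial σ k, IsIntHomogeneous c' (d p - d q) ∧ Mᵀ q = c' • Mᵀ p := by
  refine ⟨_, weightedHomogeneousComponent_isWeightedHomogeneous _ c, funext fun i => ?_⟩
  have hi : M i q = M i p * c := (congrFun hc i).trans (mul_comm _ _)
  calc M i q = weightedHomogeneousComponent (fun _ => 1) (d i - d q + e) (M i q) :=
        (weightedHomogeneousComponent_eq_self (hM i q)).symm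
    _ = weightedHomogeneousComponent (fun _ => 1) (d i - d p + e + (d p - d q)) (M i p * c) := by
        rw [hi]
        congr 2
        ring
    _ = _ := (weightedHomogeneousComponent_mul_of_left (hM i p) _ c).trans (mul_comm _ _)

theorem eval_zero_eq_zero_of_eq_smul {κ : Type*} {f w : κ → MvPolynomial σ k}
    {g : MvPolynomial σ k} (hfw : f = g • w) {e : κ → ℤ}
    (hf : ∀ i, IsIntHomogeneous (f i) (e i)) {p q : κ} (he : ∀ i, e p ≤ e i) (hp : f p ≠ 0)
    (hpq : ¬ f p ∣ f q) (i : κ) : eval 0 (w i) = 0 := by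
  by_contra hwi
  have hmul : ∀ i, f i = w i * g := fun i => by rw [hfw, Pi.smul_apply, smul_eq_mul, mul_comm]
  have hg : g ≠ 0 := right_ne_zero_of_mul (hmul p ▸ hp)
  have hwi₀ : w i ≠ 0 := fun h => hwi (by rw [h, map_zero])
  have hfi : f i ≠ 0 := hmul i ▸ mul_ne_zero hwi₀ hg
  obtain ⟨m, hm, hfpm⟩ := (hf p).exists_natCast_eq hp
  obtain ⟨n, hn, hfin⟩ := (hf i).exists_natCast_eq hfi
  have hwdeg : (w i).totalDegree = 0 := eq_zero_of_isHomogeneous_of_eval_ne_zero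
    (isHomogeneous_left_of_mul (hmul i ▸ hfin) (hmul i ▸ hfi)) hwi
  have hgdeg : n = g.totalDegree := by
    rw [← hfin.totalDegree hfi, hmul i, totalDegree_mul_of_isDomain hwi₀ hg, hwdeg, zero_add]
  have hwp : w p ≠ 0 := left_ne_zero_of_mul (hmul p ▸ hp)
  have hwpdeg : (w p).totalDegree = 0 := by
    have hsum := totalDegree_mul_of_isDomain hwp hg
    rw [← hmul p, hfpm.totalDegree hp] at hsum
    have := he i
    omega
  have hunit : IsUnit (w p) := by
    rw [totalDegree_eq_zero_iff_eq_C.1 hwpdeg] at hwp ⊢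
    exact (isUnit_iff_ne_zero.2 fun h => hwp (by rw [h, map_zero])).map C
  have hdvd : f p ∣ g := hmul p ▸ hunit.mul_left_dvd.2 dvd_rfl
  exact hpq (hdvd.trans (hmul q ▸ dvd_mul_left g (w q)))

end Grading

/-! ### Exactness off the origin -/

section ExactOffOrigin

variable {σ k ι κ : Type*} [Field k] [Fintype ι]

/-- A matrix `D` over a polynomial ring with `D² = 0` is exact off the origin if kernel and image
of `D(a)` coincide for every point `a ≠ 0`. The condition is recorded as the equality
`2 rank D(a) = dim` of dimensions. -/
structure IsExactOffOrigin (D : Matrix ι ι (MvPolynomial σ k)) : Prop where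
  mul_self : D * D = 0
  two_mul_rank : ∀ a : σ → k, a ≠ 0 → 2 * (D.map (eval a)).rank = Fintype.card ι

theorem map_eval_mulVec (M : Matrix κ ι (MvPolynomial σ k)) (u : ι → MvPolynomial σ k)
    (a : σ → k) : (M.map (eval a) *ᵥ fun i => eval a (u i)) = fun i => eval a ((M *ᵥ u) i) :=
  funext fun i => (RingHom.map_mulVec (eval a) M u i).symm

namespace IsExactOffOrigin

variable {D : Matrix ι ι (MvPolynomial σ k)}

theorem map_eval_mul_self (h : IsExactOffOrigin D) (a : σ → k) :
    D.map (eval a) * D.map (eval a) = 0 := by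
  rw [← Matrix.map_mul, h.mul_self, Matrix.map_zero _ (map_zero _)]

theorem transpose (h : IsExactOffOrigin D) : IsExactOffOrigin Dᵀ where
  mul_self := by rw [← Matrix.transpose_mul, h.mul_self, Matrix.transpose_zero]
  two_mul_rank a ha := by rw [Matrix.transpose_map, Matrix.rank_transpose, h.two_mul_rank a ha]

theorem conj [DecidableEq ι] (h : IsExactOffOrigin D) {P Q : Matrix ι ι (MvPolynomial σ k)}
    (hPQ : P * Q = 1) : IsExactOffOrigin (Q * D * P) where
  mul_self := by
    calc Q * D * P * (Q * D * P) = Q * D * (P * Q) * D * P := by simp only [mul_assoc]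
      _ = 0 := by rw [hPQ, mul_one, mul_assoc Q, h.mul_self, mul_zero, zero_mul]
  two_mul_rank a ha := by
    have hunit : ∀ {A B : Matrix ι ι (MvPolynomial σ k)}, A * B = 1 →
        IsUnit (A.map (eval a)).det := fun {A B} hAB => by
      rw [← RingHom.mapMatrix_apply, ← RingHom.map_det]
      exact (Matrix.isUnit_det_of_right_inverse hAB).map _
    rw [Matrix.map_mul, Matrix.map_mul, Matrix.rank_mul_eq_left_of_isUnit_det _ _ (hunit hPQ),
      Matrix.rank_mul_eq_right_of_isUnit_det _ _ (hunit (mul_eq_one_comm.1 hPQ)),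
      h.two_mul_rank a ha]

theorem submatrix [Fintype κ] (h : IsExactOffOrigin D) (e : κ ≃ ι) :
    IsExactOffOrigin (D.submatrix e e) where
  mul_self := by rw [Matrix.submatrix_mul_equiv, h.mul_self]; rfl
  two_mul_rank a ha := by
    rw [← Matrix.submatrix_map, Matrix.rank_submatrix, h.two_mul_rank a ha, Fintype.card_congr e]

theorem eval_apply_eq_zero_of_row_eq_zero (h : IsExactOffOrigin D) {a : σ → k} (ha : a ≠ 0) {l : ι}
    (hl : D l = 0) {v : ι → k} (hv : D.map (eval a) *ᵥ v = 0) : v l = 0 := by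
  obtain ⟨u, rfl⟩ :=
    exists_mulVec_eq_of_mul_self_eq_zero (h.map_eval_mul_self a) (h.two_mul_rank a ha) hv
  simp [Matrix.mulVec, dotProduct, hl]

theorem apply_eq_zero_of_row_eq_zero [Infinite k] [Nonempty σ] (h : IsExactOffOrigin D) {l : ι}
    (hl : D l = 0) {v : ι → MvPolynomial σ k} (hv : D *ᵥ v = 0) : v l = 0 :=
  eq_zero_of_forall_eval_eq_zero fun a ha =>
    h.eval_apply_eq_zero_of_row_eq_zero ha hl (v := fun i => eval a (v i)) <| by
      rw [map_eval_mulVec, hv]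
      exact funext fun _ => map_zero _

theorem exists_mulVec_eq_X_pow_smul [IsAlgClosed k] [Finite σ] (h : IsExactOffOrigin D)
    {z : ι → MvPolynomial σ k} (hz : D *ᵥ z = 0) :
    ∃ m, ∀ s, ∃ u, D *ᵥ u = (X s ^ m : MvPolynomial σ k) • z := by
  classical
  refine exists_forall_X_pow_mem (I := (LinearMap.range D.mulVecLin).comap
    (LinearMap.toSpanSingleton _ _ z)) fun a ha => ?_
  obtain ⟨V, hV⟩ := exists_isUnit_mul_add_mul (h.map_eval_mul_self a) (h.two_mul_rank a ha)
  set W : Matrix ι ι (MvPolynomial σ k) := V.map C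
  set N : Matrix ι ι (MvPolynomial σ k) := D * W + W * D with hN
  have hW : W.map (eval a) = V := by ext; simp [W]
  have hdet : eval a N.det ≠ 0 := by
    rw [RingHom.map_det, RingHom.mapMatrix_apply, hN, Matrix.map_add _ (map_add _), Matrix.map_mul,
      Matrix.map_mul, hW]
    exact ((Matrix.isUnit_iff_isUnit_det _).1 hV).ne_zero
  have hcomm : Commute D N := by
    rw [Commute, SemiconjBy, hN, mul_add, add_mul, ← mul_assoc, h.mul_self, mul_assoc W,
      h.mul_self, mul_zero, zero_mul, zero_add, add_zero, mul_assoc]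
  have hNz : N *ᵥ z = (D * W) *ᵥ z := by
    rw [hN, Matrix.add_mulVec, ← Matrix.mulVec_mulVec z W D, hz, Matrix.mulVec_zero, add_zero]
  refine ⟨N.det, ⟨(N.adjugate * W) *ᵥ z, ?_⟩, hdet⟩
  calc D *ᵥ ((N.adjugate * W) *ᵥ z) = N.adjugate *ᵥ (N *ᵥ z) := by
        rw [hNz, Matrix.mulVec_mulVec, Matrix.mulVec_mulVec, ← mul_assoc, ← mul_assoc,
          (commute_adjugate (fun h0 => hdet (by rw [h0, map_zero])) hcomm).eq]
    _ = N.det • z := by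
        rw [Matrix.mulVec_mulVec, Matrix.adjugate_mul, Matrix.smul_mulVec, Matrix.one_mulVec]

end IsExactOffOrigin

end ExactOffOrigin

namespace IsPrimitive

variable {σ k n : Type*} [Field k] {a : σ → k}

theorem eval_eq_zero_of_dotProduct_eq_zero {w v : Fin 2 → MvPolynomial σ k} (hw : IsPrimitive w)
    (h : w ⬝ᵥ v = 0) (ha : ∀ i, eval a (w i) = 0) (i : Fin 2) : eval a (v i) = 0 := by
  obtain ⟨t, rfl⟩ := hw.exists_eq_smul_of_dotProduct_eq_zero h
  revert i
  simp [ha]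

theorem rank_map_eval_le_one [Fintype n] {w : Fin 3 → MvPolynomial σ k} (hw : IsPrimitive w)
    {B : Matrix (Fin 3) n (MvPolynomial σ k)} (hB : w ᵥ* B = 0) (ha : ∀ i, eval a (w i) = 0) :
    (B.map (eval a)).rank ≤ 1 := by
  refine rank_le_one_of_minors_eq fun p q i j => ?_
  obtain ⟨t, ht⟩ := hw.exists_crossProduct_eq_smul (congrFun hB i) (congrFun hB j)
  have hcross : ∀ l, eval a (((fun x => B x i) ⨯₃ fun x => B x j) l) = 0 := fun l => by
    rw [ht, Pi.smul_apply, smul_eq_mul, map_mul, ha, mul_zero]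
  simp only [cross_apply, Fin.forall_fin_succ, Matrix.cons_val_zero, map_sub, map_mul,
    Matrix.cons_val_succ, Matrix.cons_val_fin_one, forall_const] at hcross
  fin_cases p <;> fin_cases q <;>
    simp only [Matrix.map_apply, Fin.zero_eta, Fin.mk_one, Fin.reduceFinMk] <;> grind

theorem exists_map_eval_mulVec_eq_zero {w w' : Fin 2 → MvPolynomial σ k} (hw : IsPrimitive w)
    (hw' : IsPrimitive w') {B B' : Matrix (Fin 2) (Fin 2) (MvPolynomial σ k)}
    (hB : w ⬝ᵥ (B *ᵥ w') = 0) (hB' : B' *ᵥ w' = 0) (ha : ∀ i, eval a (w i) = 0)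
    (hdet : eval a B.det = 0) :
    ∃ v ≠ 0, B.map (eval a) *ᵥ v = 0 ∧ B'.map (eval a) *ᵥ v = 0 := by
  by_cases hw'a : ∀ i, eval a (w' i) = 0
  · have hB'a : B'.map (eval a) = 0 := Matrix.ext fun i =>
      hw'.eval_eq_zero_of_dotProduct_eq_zero (dotProduct_comm (B' i) w' ▸ congrFun hB' i) hw'a
    rw [RingHom.map_det, RingHom.mapMatrix_apply] at hdet
    obtain ⟨v, hv, hBv⟩ := Matrix.exists_mulVec_eq_zero_iff.2 hdet
    exact ⟨v, hv, hBv, by rw [hB'a, Matrix.zero_mulVec]⟩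
  · refine ⟨fun i => eval a (w' i), fun h => hw'a (congrFun h), ?_, ?_⟩
    · rw [map_eval_mulVec]
      exact funext (hw.eval_eq_zero_of_dotProduct_eq_zero hB ha)
    · rw [map_eval_mulVec, hB']
      exact funext fun _ => map_zero _

end IsPrimitive

section ExactGraded

variable {σ k ι κ : Type*} [Field k] [Fintype ι]

namespace IsExactOffOrigin

variable {D : Matrix ι ι (MvPolynomial σ k)}

section ZeroOut

variable [IsAlgClosed k] [Finite σ] [Nontrivial σ] [DecidableEq ι] {d : ι → ℤ} {a : σ → k}

theorem exists_mulVec_eq_single (h : IsExactOffOrigin D) (hD : IsGraded d 1 D) {i : ι}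
    (hi : Dᵀ i = 0) (ha : a ≠ 0) : ∃ w, D.map (eval a) *ᵥ w = Pi.single i 1 ∧
      ∀ l, D l = 0 → d l ≤ d i → w l = 0 := by
  obtain ⟨s, hs⟩ := Function.ne_iff.1 ha
  obtain ⟨t, hts⟩ := exists_ne s
  obtain ⟨m, hm⟩ := h.exists_mulVec_eq_X_pow_smul (z := Pi.single i 1)
    (by rw [Matrix.mulVec_single_one]; exact hi)
  obtain ⟨u', hu'⟩ := hm s
  obtain ⟨u, hu, hdeg⟩ := hD.exists_mulVec_eq_isIntHomogeneous (n := m - d i) (fun j => by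
    obtain rfl | hj := eq_or_ne j i
    · simpa using isIntHomogeneous_natCast_iff.2 (isHomogeneous_X_pow s m)
    · simpa [hj] using isWeightedHomogeneous_zero k _ _) hu'
  have hul : ∀ l, D l = 0 → d l ≤ d i → u l = 0 := fun l hl hle => by
    obtain ⟨u'', hu''⟩ := hm t
    have hker := h.apply_eq_zero_of_row_eq_zero hl
      (v := (X t ^ m : MvPolynomial σ k) • u - (X s ^ m : MvPolynomial σ k) • u'') <| by
        rw [Matrix.mulVec_sub, Matrix.mulVec_smul, Matrix.mulVec_smul, hu, hu'', smul_comm,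
          sub_self]
    exact (hdeg l).eq_zero_of_X_pow_dvd (by omega)
      (X_pow_dvd_of_X_pow_dvd_mul hts.symm ⟨u'' l, sub_eq_zero.1 hker⟩)
  refine ⟨(a s ^ m)⁻¹ • fun j => eval a (u j), ?_, fun l hl hle => by simp [hul l hl hle]⟩
  rw [Matrix.mulVec_smul, map_eval_mulVec, hu]
  ext j
  obtain rfl | hj := eq_or_ne j i
  · have hs' : a s ≠ 0 := hs
    simp [hs']
  · simp [hj]

theorem rank_zeroOut_add_card_le (h : IsExactOffOrigin D) (hD : IsGraded d 1 D) {s t : Finset ι}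
    (hs : ∀ i ∈ s, Dᵀ i = 0) (ht : ∀ l ∈ t, D l = 0) (hd : ∀ i ∈ s, ∀ l ∈ t, d l ≤ d i)
    (ha : a ≠ 0) :
    (zeroOut s t (D.map (eval a))).rank + s.card + t.card ≤ (D.map (eval a)).rank := by
  refine _root_.rank_zeroOut_add_card_le (fun i hi => ?_) fun l hl => ?_
  · obtain ⟨w, hw, hwl⟩ := h.exists_mulVec_eq_single hD (hs i hi) ha
    exact ⟨w, hw, fun l hl => hwl l (ht l hl) (hd i hi l hl)⟩
  · obtain ⟨w, hw, -⟩ := h.transpose.exists_mulVec_eq_single hD.transpose (i := l) (ht l hl) ha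
    exact ⟨w, hw⟩

end ZeroOut

section Factorization

variable [Fintype κ] {Z : Matrix ι κ (MvPolynomial σ k)} {Y : Matrix κ ι (MvPolynomial σ k)}

theorem rank_map_eval_mul (h : IsExactOffOrigin (Z * Y))
    (hcard : 2 * Fintype.card κ = Fintype.card ι) {a : σ → k} (ha : a ≠ 0) :
    (Z.map (eval a) * Y.map (eval a)).rank = Fintype.card κ := by
  have := h.two_mul_rank a ha
  rw [Matrix.map_mul] at this
  omega

theorem mulVec_injective_of_mul [Infinite k] [Nonempty σ] (h : IsExactOffOrigin (Z * Y))
    (hcard : 2 * Fintype.card κ = Fintype.card ι) : Function.Injective Z.mulVec := by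
  refine (injective_iff_map_eq_zero Z.mulVecLin).2 fun c hc => ?_
  rw [Matrix.mulVecLin_apply] at hc
  refine funext fun j => eq_zero_of_forall_eval_eq_zero fun a ha => ?_
  have hca : (fun j => eval a (c j)) = 0 :=
    mulVec_injective_of_rank_mul_eq_card (h.rank_map_eval_mul hcard ha) <| by
      rw [map_eval_mulVec, hc, Matrix.mulVec_zero]
      exact funext fun _ => map_zero _
  exact congrFun hca j

theorem mul_mul_left_eq_zero [Infinite k] [Nonempty σ] (h : IsExactOffOrigin (Z * Y))
    (hcard : 2 * Fintype.card κ = Fintype.card ι) : Z * Y * Z = 0 := by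
  classical
  have heval : ∀ a : σ → k, a ≠ 0 → (Z * Y * Z).map (eval a) = 0 := fun a ha =>
    Matrix.ext_of_mulVec_single fun j => by
      obtain ⟨u, hu⟩ := mulVec_surjective_of_rank_mul_eq_card (h.rank_map_eval_mul hcard ha)
        (Pi.single j 1)
      rw [← hu, Matrix.mulVec_mulVec, ← Matrix.map_mul, Matrix.mul_assoc, Matrix.map_mul,
        h.map_eval_mul_self, Matrix.zero_mulVec, Matrix.zero_mulVec]
  exact Matrix.ext fun i j =>
    eq_zero_of_forall_eval_eq_zero fun a ha => congrFun₂ (heval a ha) i j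

variable [IsAlgClosed k] [Finite σ]

theorem exists_mulVec_eq_of_mul [Nontrivial σ] (h : IsExactOffOrigin (Z * Y))
    (hcard : 2 * Fintype.card κ = Fintype.card ι) {v : ι → MvPolynomial σ k}
    (hv : (Z * Y) *ᵥ v = 0) : ∃ c, Z *ᵥ c = v := by
  obtain ⟨s, t, hst⟩ := exists_pair_ne σ
  obtain ⟨m, hm⟩ := h.exists_mulVec_eq_X_pow_smul hv
  obtain ⟨u, hu⟩ := hm s
  obtain ⟨u', hu'⟩ := hm t
  rw [← Matrix.mulVec_mulVec] at hu hu'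
  exact exists_mulVec_eq_of_smul_pair (pow_ne_zero m (X_ne_zero s))
    (fun f => X_pow_dvd_of_X_pow_dvd_mul hst) (h.mulVec_injective_of_mul hcard) hu hu'

theorem exists_mul_mulVec_eq (h : IsExactOffOrigin (Z * Y)) (hσ : 2 < Nat.card σ)
    (hcard : 2 * Fintype.card κ = Fintype.card ι) {z : ι → MvPolynomial σ k}
    (hz : (Z * Y) *ᵥ z = 0) : ∃ u, (Z * Y) *ᵥ u = z := by
  have := Fintype.ofFinite σ
  rw [Nat.card_eq_fintype_card] at hσ
  obtain ⟨s, t, l, hst, hsl, htl⟩ := Fintype.two_lt_card_iff.1 hσ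
  have : Nontrivial σ := ⟨s, t, hst⟩
  obtain ⟨m, hm⟩ := h.exists_mulVec_eq_X_pow_smul hz
  obtain ⟨p, hp⟩ := hm s
  obtain ⟨q, hq⟩ := hm t
  obtain ⟨w, hw⟩ := hm l
  refine exists_mulVec_eq_of_smul_triple (pow_ne_zero m (X_ne_zero s))
    (fun f => X_pow_dvd_of_X_pow_dvd_mul hst) (fun f hf => ?_) (h.mulVec_injective_of_mul hcard)
    (h.mul_mul_left_eq_zero hcard) (fun v => h.exists_mulVec_eq_of_mul hcard) hp hq hw
  rw [← Set.image_pair (fun s => (X s : MvPolynomial σ k) ^ m)] at hf ⊢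
  exact mem_span_X_pow_of_X_pow_mul_mem (by simp [hsl.symm, htl.symm]) hf

end Factorization

end IsExactOffOrigin

end ExactGraded

namespace IsExactOffOrigin

variable {σ k ι : Type*} [Field k] [IsAlgClosed k] [Finite σ] [Fintype ι]
  {D : Matrix ι ι (MvPolynomial σ k)} {d : ι → ℤ}

theorem exists_zeroOut_eq_vecMulVec [Nontrivial σ] [DecidableEq ι] (h : IsExactOffOrigin D)
    (hD : IsGraded d 1 D) {s t : Finset ι} (hs : ∀ i ∈ s, Dᵀ i = 0) (ht : ∀ l ∈ t, D l = 0)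
    (hd : ∀ i ∈ s, ∀ l ∈ t, d l ≤ d i) (hcard : 2 * (s.card + t.card + 1) = Fintype.card ι) :
    ∃ v w, zeroOut s t D = Matrix.vecMulVec v w := by
  refine exists_eq_vecMulVec_of_minors_eq fun p q i j => sub_eq_zero.1 <|
    eq_zero_of_forall_eval_eq_zero fun a ha => ?_
  have hrank : (zeroOut s t (D.map (eval a))).rank ≤ 1 := by
    have := h.rank_zeroOut_add_card_le hD hs ht hd ha
    have := h.two_mul_rank a ha
    omega
  have hout : zeroOut s t (D.map (eval a)) = (zeroOut s t D).map (eval a) := by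
    ext i j
    simp [zeroOut, apply_ite (eval a)]
  rw [hout] at hrank
  rw [map_sub, map_mul, map_mul, sub_eq_zero]
  exact minors_eq_of_rank_le_one hrank p q i j

theorem exists_lt_of_zero_cols_of_zero_rows (h : IsExactOffOrigin D) (hD : IsGraded d 1 D)
    (hσ : 2 < Nat.card σ) (h0 : D.map (eval 0) = 0) {s t : Finset ι} (hs : ∀ i ∈ s, Dᵀ i = 0)
    (ht : ∀ l ∈ t, D l = 0) (hne : s.Nonempty)
    (hcard : 2 * (s.card + t.card + 1) = Fintype.card ι) : ∃ i ∈ s, ∃ l ∈ t, d i < d l := by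
  classical
  by_contra! hd
  have : Nontrivial σ := Finite.one_lt_card_iff_nontrivial.1 (by omega)
  obtain ⟨v, w, hvw⟩ := h.exists_zeroOut_eq_vecMulVec hD hs ht hd hcard
  obtain ⟨Z, Y, rfl⟩ := exists_eq_mul_of_zeroOut_eq_vecMulVec hvw
  obtain ⟨i, hi⟩ := hne
  obtain ⟨u, hu⟩ := h.exists_mul_mulVec_eq hσ (by simpa [add_assoc] using hcard)
    (z := Pi.single i 1) (by rw [Matrix.mulVec_single_one]; exact hs i hi)
  have heval := congrFun (map_eval_mulVec (Z * Y) u 0) i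
  rw [h0, hu] at heval
  simp at heval

theorem exists_lt_of_col_eq_smul_col [DecidableEq ι] (h : IsExactOffOrigin D)
    (hD : IsGraded d 1 D) (hσ : 2 < Nat.card σ) (h0 : D.map (eval 0) = 0)
    {s t : Finset ι} (hs : ∀ i ∈ s, Dᵀ i = 0) (ht : ∀ l ∈ t, D l = 0)
    {p q : ι} (hpq : p ≠ q) (hpt : p ∉ t) {c : MvPolynomial σ k} (hc : Dᵀ q = c • Dᵀ p)
    (hcard : 2 * ((insert q s).card + t.card + 1) = Fintype.card ι) :
    ∃ i ∈ insert q s, ∃ l ∈ t, d i < d l := by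
  obtain ⟨c, hcdeg, hc⟩ := hD.exists_isIntHomogeneous_col_eq_smul_col hc
  set P := Matrix.transvection p q (-c)
  set Q := Matrix.transvection p q c
  have hPQ : P * Q = 1 := by
    rw [Matrix.transvection_mul_transvection_same p q hpq, neg_add_cancel, Matrix.transvection_zero]
  have hgraded : IsGraded d 1 (Q * D * P) := by
    simpa using (((isGraded_transvection hpq hcdeg).mul hD).mul
      (isGraded_transvection hpq hcdeg.neg))
  have hzero : (Q * D * P).map (eval 0) = 0 := by
    rw [Matrix.map_mul, Matrix.map_mul, h0, Matrix.mul_zero, Matrix.zero_mul]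
  have hcols : ∀ i ∈ insert q s, ∀ j, (D * P) j i = 0 := fun i hi j => by
    obtain rfl | hiq := eq_or_ne i q
    · rw [Matrix.mul_transvection_apply_same, show D j i = c * D j p from congrFun hc j, neg_mul,
        add_neg_cancel]
    · rw [Matrix.mul_transvection_apply_of_ne _ _ _ _ hiq]
      exact congrFun (hs i (Finset.mem_of_mem_insert_of_ne hi hiq)) j
  have hrows : ∀ l ∈ t, ∀ j, (Q * D) l j = 0 := fun l hl j => by
    rw [Matrix.transvection_mul_apply_of_ne _ _ _ _ (ne_of_mem_of_not_mem hl hpt), ht l hl,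
      Pi.zero_apply]
  refine (h.conj hPQ).exists_lt_of_zero_cols_of_zero_rows hgraded hσ hzero (fun i hi => ?_)
    (fun l hl => ?_) (Finset.insert_nonempty q s) hcard
  · ext1 j
    rw [Matrix.transpose_apply, mul_assoc, Matrix.mul_apply]
    exact Finset.sum_eq_zero fun x _ => by rw [hcols i hi, mul_zero]
  · ext1 j
    rw [Matrix.mul_apply]
    exact Finset.sum_eq_zero fun x _ => by rw [hrows l hl, zero_mul]

end IsExactOffOrigin

theorem IsExactOffOrigin.two_mul_card_le {σ k ι : Type*} [Field k] [Fintype ι]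
    {D : Matrix ι ι (MvPolynomial σ k)} (h : IsExactOffOrigin D) {a : σ → k} (ha : a ≠ 0)
    {s : Finset ι} (hs : ∀ i ∈ s, Dᵀ i = 0) : 2 * s.card ≤ Fintype.card ι := by
  classical
  have hout : zeroOut ∅ sᶜ (D.map (eval a)) = 0 := by
    ext i j
    by_cases hj : j ∈ s
    · simp [zeroOut, hj, show D i j = 0 from congrFun (hs j hj) i]
    · simp [zeroOut, hj]
  have hrank := rank_le_rank_zeroOut_add ∅ sᶜ (D.map (eval a))
  rw [hout, Matrix.rank_zero, Finset.card_empty, Finset.card_compl] at hrank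
  have := h.two_mul_rank a ha
  have := s.card_le_univ
  omega

/-! ### Triangular differentials -/

theorem transpose_submatrix_rev_apply_eq_zero {α : Type*} [Zero α] {n R : ℕ}
    {M : Matrix (Fin n) (Fin n) α} (hR : ∀ i : Fin n, n ≤ i + R → M i = 0) {j : Fin n}
    (hj : j < R) : (Mᵀ.submatrix Fin.rev Fin.rev)ᵀ j = 0 :=
  funext fun i => congrFun (hR j.rev (by rw [Fin.val_rev]; omega)) i.rev

/-- A minimal graded differential on a filtered free module, exact off the origin: the matrix is
strictly upper triangular, its entries vanish at the origin, and the degrees `d` of the generators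
are monotone along the filtration. -/
structure IsTriangularDifferential {σ k : Type*} [Field k] {n : ℕ} (d : Fin n → ℤ)
    (D : Matrix (Fin n) (Fin n) (MvPolynomial σ k)) : Prop where
  isExactOffOrigin : IsExactOffOrigin D
  isGraded : IsGraded d 1 D
  antitone : Antitone d
  apply_eq_zero : ∀ i j, j ≤ i → D i j = 0
  map_eval_zero : D.map (eval 0) = 0

namespace IsTriangularDifferential

section

variable {σ k : Type*} [Field k] {n : ℕ} {d : Fin n → ℤ}
  {D : Matrix (Fin n) (Fin n) (MvPolynomial σ k)}

theorem antitranspose (h : IsTriangularDifferential d D) :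
    IsTriangularDifferential (-(d ∘ Fin.rev)) (Dᵀ.submatrix Fin.rev Fin.rev) where
  isExactOffOrigin := h.isExactOffOrigin.transpose.submatrix Fin.revPerm
  isGraded _ _ := h.isGraded.transpose _ _
  antitone _ _ hij := neg_le_neg (h.antitone (Fin.rev_le_rev.2 hij))
  apply_eq_zero _ _ hij := h.apply_eq_zero _ _ (Fin.rev_le_rev.2 hij)
  map_eval_zero := Matrix.ext fun i j => congrFun₂ h.map_eval_zero (Fin.rev j) (Fin.rev i)

theorem sum_Ioo_mul_eq_zero (h : IsTriangularDifferential d D) (i j : Fin n) :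
    ∑ l ∈ Finset.Ioo i j, D i l * D l j = 0 := by
  rw [Finset.sum_subset (Finset.subset_univ _) fun l _ hl => ?_]
  · exact (Matrix.mul_apply (M := D) (N := D)).symm.trans
      (congrFun₂ h.isExactOffOrigin.mul_self i j)
  · rw [Finset.mem_Ioo, not_and_or, not_lt, not_lt] at hl
    obtain hl | hl := hl
    · rw [h.apply_eq_zero i l hl, zero_mul]
    · rw [h.apply_eq_zero l j hl, mul_zero]

end

variable {σ k : Type*} [Field k] {d : Fin 8 → ℤ} {D : Matrix (Fin 8) (Fin 8) (MvPolynomial σ k)}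
  {R C : ℕ}

theorem transpose_apply_zero (h : IsTriangularDifferential d D) : Dᵀ 0 = 0 :=
  funext fun i => h.apply_eq_zero i 0 (Fin.zero_le i)

theorem apply_seven (h : IsTriangularDifferential d D) : D 7 = 0 :=
  funext fun j => h.apply_eq_zero 7 j (Fin.le_last j)

theorem apply_two_three_eq_zero (h : IsTriangularDifferential d D) (h34 : D 3 4 ≠ 0) :
    D 2 3 = 0 := by
  have h24 := h.sum_Ioo_mul_eq_zero 2 4
  rw [show Finset.Ioo (2 : Fin 8) 4 = {3} by decide, Finset.sum_singleton] at h24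
  exact (mul_eq_zero.1 h24).resolve_right h34

theorem rank_zeroOut_le_rank_submatrix {p q : Type*} [Finite p] [Fintype q]
    (h : IsTriangularDifferential d D) {a : σ → k} {f : p → Fin 8} {g : q → Fin 8}
    (hf : Function.Injective f) (hg : Function.Injective g) (hf0 : ∀ x, f x ≠ 0)
    (hg7 : ∀ y, g y ≠ 7) (hD : ∀ i j, i ≠ 0 → j ≠ 7 → i < j →
      ((∀ x, f x ≠ i) ∨ ∀ y, g y ≠ j) → eval a (D i j) = 0) :
    (zeroOut {0} {7} (D.map (eval a))).rank ≤ ((D.submatrix f g).map (eval a)).rank := by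
  have hzero : ∀ i j, ((∀ x, f x ≠ i) ∨ ∀ y, g y ≠ j) →
      zeroOut {0} {7} (D.map (eval a)) i j = 0 := fun i j hij => by
    simp only [zeroOut, Finset.mem_singleton, Matrix.of_apply, Matrix.map_apply, ite_eq_left_iff,
      not_or]
    rintro ⟨h0, h7⟩
    obtain hlt | hle := lt_or_ge i j
    · exact hD i j h0 h7 hlt hij
    · rw [h.apply_eq_zero i j hle, map_zero]
  have hout : (zeroOut {0} {7} (D.map (eval a))).submatrix f g =
      (D.submatrix f g).map (eval a) := by
    ext x y
    simp [zeroOut, hf0, hg7]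
  rw [← hout]
  exact rank_le_rank_submatrix hf hg
    (fun i hi => funext fun j => hzero i j (.inl fun x hx => hi ⟨x, hx⟩))
    fun j hj => funext fun i => hzero i j (.inr fun y hy => hj ⟨y, hy⟩)

theorem vecMul_submatrix_eq_zero_of_row (h : IsTriangularDifferential d D) (h45 : D 4 5 = 0)
    (h46 : D 4 6 = 0) (h56 : D 5 6 = 0) {g : MvPolynomial σ k} (hg : g ≠ 0)
    {w : Fin 3 → MvPolynomial σ k} (hgw : (fun i => D 0 (![1, 2, 3] i)) = g • w) :
    w ᵥ* D.submatrix ![1, 2, 3] ![4, 5, 6] = 0 := by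
  refine (smul_eq_zero.1 ?_).resolve_left hg
  rw [← Matrix.smul_vecMul, ← hgw]
  have h04 := h.sum_Ioo_mul_eq_zero 0 4
  have h05 := h.sum_Ioo_mul_eq_zero 0 5
  have h06 := h.sum_Ioo_mul_eq_zero 0 6
  rw [show Finset.Ioo (0 : Fin 8) 4 = {1, 2, 3} by decide] at h04
  rw [show Finset.Ioo (0 : Fin 8) 5 = {1, 2, 3, 4} by decide] at h05
  rw [show Finset.Ioo (0 : Fin 8) 6 = {1, 2, 3, 4, 5} by decide] at h06
  ext1 j
  fin_cases j <;> simp_all [Matrix.vecMul, dotProduct, Fin.sum_univ_three, add_assoc]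

theorem submatrix_mulVec_eq_zero_of_col (h : IsTriangularDifferential d D)
    (h34 : D 3 4 = 0) {g : MvPolynomial σ k} (hg : g ≠ 0) {w : Fin 2 → MvPolynomial σ k}
    (hgw : (fun i => D (![6, 5] i) 7) = g • w) :
    D.submatrix ![3, 4] ![6, 5] *ᵥ w = 0 := by
  refine (smul_eq_zero.1 ?_).resolve_left hg
  have h37 := h.sum_Ioo_mul_eq_zero 3 7
  have h47 := h.sum_Ioo_mul_eq_zero 4 7
  rw [show Finset.Ioo (3 : Fin 8) 7 = {4, 5, 6} by decide] at h37
  rw [show Finset.Ioo (4 : Fin 8) 7 = {5, 6} by decide] at h47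
  rw [← Matrix.mulVec_smul, ← hgw]
  ext1 i
  fin_cases i <;> simp_all [Matrix.mulVec, dotProduct, add_comm]

theorem dotProduct_submatrix_mulVec_eq_zero (h : IsTriangularDifferential d D) (h56 : D 5 6 = 0)
    {g : MvPolynomial σ k} (hg : g ≠ 0) {w w' : Fin 2 → MvPolynomial σ k}
    (hgw : (fun i => D 0 (![1, 2] i)) = g • w) (hw' : D.submatrix ![3, 4] ![6, 5] *ᵥ w' = 0) :
    w ⬝ᵥ (D.submatrix ![1, 2] ![6, 5] *ᵥ w') = 0 := by
  refine (smul_eq_zero.1 ?_).resolve_left hg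
  have h05 := h.sum_Ioo_mul_eq_zero 0 5
  have h06 := h.sum_Ioo_mul_eq_zero 0 6
  rw [show Finset.Ioo (0 : Fin 8) 5 = {1, 2, 3, 4} by decide] at h05
  rw [show Finset.Ioo (0 : Fin 8) 6 = {1, 2, 3, 4, 5} by decide] at h06
  have h3 := congrFun hw' 0
  have h4 := congrFun hw' 1
  rw [← smul_dotProduct, ← hgw]
  simp only [Fin.isValue, Finset.mem_insert, Fin.reduceEq, Finset.mem_singleton, or_self,
    not_false_eq_true, Finset.sum_insert, Finset.sum_singleton, h56, mul_zero, add_zero,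
    Matrix.mulVec, dotProduct, Matrix.submatrix_apply, Matrix.cons_val_zero, Fin.sum_univ_two,
    Matrix.cons_val_one, Matrix.cons_val_fin_one, Pi.zero_apply] at h05 h06 h3 h4 ⊢
  linear_combination w' 0 * h06 + w' 1 * h05 - D 0 3 * h3 - D 0 4 * h4

theorem eval_apply_three_four_eq_zero (h : IsTriangularDifferential d D) (h34 : D 3 4 = 0)
    {g : MvPolynomial σ k} (hg : g ≠ 0) {w : Fin 2 → MvPolynomial σ k} (hw : IsPrimitive w)
    (hgw : (fun i => D 0 (![1, 2] i)) = g • w) {a : σ → k} (ha : ∀ i, eval a (w i) = 0)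
    {i j : Fin 8} (hi : i = 1 ∨ i = 2) (hj : j = 3 ∨ j = 4) : eval a (D i j) = 0 := by
  have hdot : w ⬝ᵥ (fun x => D (![1, 2] x) j) = 0 := by
    refine (smul_eq_zero.1 ?_).resolve_left hg
    have h03 := h.sum_Ioo_mul_eq_zero 0 3
    have h04 := h.sum_Ioo_mul_eq_zero 0 4
    rw [show Finset.Ioo (0 : Fin 8) 3 = {1, 2} by decide] at h03
    rw [show Finset.Ioo (0 : Fin 8) 4 = {1, 2, 3} by decide] at h04
    rw [← smul_dotProduct, ← hgw]
    obtain rfl | rfl := hj <;> simp_all [dotProduct]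
  obtain rfl | rfl := hi
  · exact hw.eval_eq_zero_of_dotProduct_eq_zero hdot ha 0
  · exact hw.eval_eq_zero_of_dotProduct_eq_zero hdot ha 1

theorem le_four_of_zero_cols [Nonempty σ] (h : IsTriangularDifferential d D)
    (hC : ∀ j : Fin 8, j < C → Dᵀ j = 0) : C ≤ 4 := by
  have hle := h.isExactOffOrigin.two_mul_card_le one_ne_zero
    (s := Finset.univ.filter fun j : Fin 8 => (j : ℕ) < C) (by simpa using hC)
  rw [Fin.card_filter_val_lt, Fintype.card_fin] at hle
  omega

theorem le_four_of_zero_rows [Nonempty σ] (h : IsTriangularDifferential d D)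
    (hR : ∀ i : Fin 8, 8 ≤ i + R → D i = 0) : R ≤ 4 :=
  h.antitranspose.le_four_of_zero_cols (fun _ hj => transpose_submatrix_rev_apply_eq_zero hR hj)

variable [IsAlgClosed k] [Finite σ]

theorem add_le_four [Nontrivial σ] (h : IsTriangularDifferential d D)
    (hC : ∀ j : Fin 8, j < C → Dᵀ j = 0) (hR : ∀ i : Fin 8, 8 ≤ i + R → D i = 0) :
    R + C ≤ 4 := by
  have hC4 := h.le_four_of_zero_cols hC
  have hR4 := h.le_four_of_zero_rows hR
  have hle := h.isExactOffOrigin.rank_zeroOut_add_card_le h.isGraded (a := 1)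
    (s := Finset.univ.filter fun j : Fin 8 => (j : ℕ) < C)
    (t := Finset.univ.filter fun i : Fin 8 => 8 ≤ i + R) (by simpa using hC) (by simpa using hR)
    (fun i hi l hl => h.antitone <| by
      simp only [Finset.mem_filter, Finset.mem_univ, true_and] at hi hl
      omega) one_ne_zero
  have h4 := h.isExactOffOrigin.two_mul_rank 1 one_ne_zero
  have ht : (Finset.univ.filter fun i : Fin 8 => 8 ≤ (i : ℕ) + R).card = R := by
    interval_cases R <;> rfl
  rw [Fin.card_filter_val_lt, ht] at hle
  rw [Fintype.card_fin] at h4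
  omega

theorem apply_zero_one_ne_zero (h : IsTriangularDifferential d D) (hσ : 2 < Nat.card σ) :
    D 0 1 ≠ 0 := fun h01 => by
  have hcol : Dᵀ 1 = 0 := funext fun i => by
    obtain rfl | hi := eq_or_ne i 0
    · exact h01
    · exact h.apply_eq_zero i 1 (Fin.one_le_of_ne_zero hi)
  obtain ⟨i, -, l, hl, hlt⟩ := h.isExactOffOrigin.exists_lt_of_zero_cols_of_zero_rows h.isGraded hσ
    h.map_eval_zero (s := {0, 1}) (t := {7}) (by simp [h.transpose_apply_zero, hcol])
    (by simp [h.apply_seven]) (Finset.insert_nonempty _ _) (by simp)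
  rw [Finset.mem_singleton.1 hl] at hlt
  exact hlt.not_ge (h.antitone (Fin.le_last i))

theorem le_one_of_zero_cols (h : IsTriangularDifferential d D) (hσ : 2 < Nat.card σ)
    (hC : ∀ j : Fin 8, j < C → Dᵀ j = 0) : C ≤ 1 := by
  by_contra! hlt
  exact h.apply_zero_one_ne_zero hσ (congrFun (hC 1 hlt) 0)

theorem le_one_of_zero_rows (h : IsTriangularDifferential d D) (hσ : 2 < Nat.card σ)
    (hR : ∀ i : Fin 8, 8 ≤ i + R → D i = 0) : R ≤ 1 :=
  h.antitranspose.le_one_of_zero_cols hσ (fun _ hj => transpose_submatrix_rev_apply_eq_zero hR hj)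

theorem apply_one_two_eq_zero (h : IsTriangularDifferential d D) (hσ : 2 < Nat.card σ) :
    D 1 2 = 0 := by
  have h02 := h.sum_Ioo_mul_eq_zero 0 2
  rw [show Finset.Ioo (0 : Fin 8) 2 = {1} by decide, Finset.sum_singleton] at h02
  exact (mul_eq_zero.1 h02).resolve_left (h.apply_zero_one_ne_zero hσ)

theorem apply_five_six_eq_zero (h : IsTriangularDifferential d D) (hσ : 2 < Nat.card σ) :
    D 5 6 = 0 := h.antitranspose.apply_one_two_eq_zero hσ

theorem apply_one_three_eq_zero (h : IsTriangularDifferential d D) (hσ : 2 < Nat.card σ)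
    (h34 : D 3 4 ≠ 0) : D 1 3 = 0 := by
  have h14 := h.sum_Ioo_mul_eq_zero 1 4
  rw [show Finset.Ioo (1 : Fin 8) 4 = {2, 3} by decide, Finset.sum_pair (by decide),
    h.apply_one_two_eq_zero hσ, zero_mul, zero_add] at h14
  exact (mul_eq_zero.1 h14).resolve_right h34

theorem not_apply_zero_one_dvd (h : IsTriangularDifferential d D) (hσ : 2 < Nat.card σ) :
    ¬ D 0 1 ∣ D 0 2 := fun ⟨c, hc⟩ => by
  have hcol : Dᵀ 2 = c • Dᵀ 1 := funext fun i => by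
    change D i 2 = c * D i 1
    obtain rfl | hi := eq_or_ne i 0
    · rw [hc, mul_comm]
    rw [h.apply_eq_zero i 1 (Fin.one_le_of_ne_zero hi), mul_zero]
    obtain rfl | hi' := eq_or_ne i 1
    · exact h.apply_one_two_eq_zero hσ
    · exact h.apply_eq_zero i 2 (by grind)
  obtain ⟨i, -, l, hl, hlt⟩ := h.isExactOffOrigin.exists_lt_of_col_eq_smul_col h.isGraded hσ
    h.map_eval_zero (s := {0}) (t := {7}) (by simp [h.transpose_apply_zero])
    (by simp [h.apply_seven]) (by decide) (by decide) hcol (by simp)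
  rw [Finset.mem_singleton.1 hl] at hlt
  exact hlt.not_ge (h.antitone (Fin.le_last i))

theorem exists_isPrimitive_row {κ : Type*} [Finite κ] (h : IsTriangularDifferential d D)
    (hσ : 2 < Nat.card σ) {e : κ → Fin 8} (he : ∀ i, 1 ≤ e i) {p q : κ} (hp : e p = 1)
    (hq : e q = 2) : ∃ (g : MvPolynomial σ k) (w : κ → MvPolynomial σ k), g ≠ 0 ∧
      (fun i => D 0 (e i)) = g • w ∧ IsPrimitive w ∧ ∀ i, eval 0 (w i) = 0 := by
  have h01 := h.apply_zero_one_ne_zero hσ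
  obtain ⟨g, w, hgw, hw⟩ := exists_eq_smul_isPrimitive (f := fun i => D 0 (e i))
    fun h0 => h01 (hp ▸ congrFun h0 p)
  refine ⟨g, w, ?_, hgw, hw, eval_zero_eq_zero_of_eq_smul hgw (p := p) (q := q)
    (fun i => h.isGraded 0 (e i)) (fun i => ?_) (by rwa [hp])
    (by rw [hp, hq]; exact h.not_apply_zero_one_dvd hσ)⟩
  · rintro rfl
    exact h01 (hp ▸ (congrFun hgw p).trans (zero_mul _))
  · have := h.antitone (he i)
    rw [hp]
    omega

theorem exists_isPrimitive_col (h : IsTriangularDifferential d D) (hσ : 2 < Nat.card σ) :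
    ∃ (g : MvPolynomial σ k) (w : Fin 2 → MvPolynomial σ k), g ≠ 0 ∧
      (fun i => D (![6, 5] i) 7) = g • w ∧ IsPrimitive w := by
  obtain ⟨g, w, hg, hgw, hw, -⟩ := h.antitranspose.exists_isPrimitive_row hσ
    (e := (![1, 2] : Fin 2 → Fin 8)) (by decide) (p := 0) (q := 1) rfl rfl
  exact ⟨g, w, hg, hgw ▸ funext (Fin.forall_fin_two.2 ⟨rfl, rfl⟩), hw⟩

theorem exists_rank_zeroOut_le_one_of_apply_three_four_ne_zero (h : IsTriangularDifferential d D)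
    (hσ : 3 < Nat.card σ) (h34 : D 3 4 ≠ 0) :
    ∃ a ≠ 0, (zeroOut {0} {7} (D.map (eval a))).rank ≤ 1 := by
  have hσ' : 2 < Nat.card σ := by omega
  have h12 := h.apply_one_two_eq_zero hσ'
  have h13 := h.apply_one_three_eq_zero hσ' h34
  have h23 := h.apply_two_three_eq_zero h34
  have h56 := h.apply_five_six_eq_zero hσ'
  have h46 : D 4 6 = 0 := h.antitranspose.apply_one_three_eq_zero hσ' h34
  have h45 : D 4 5 = 0 := h.antitranspose.apply_two_three_eq_zero h34
  obtain ⟨g, w, hg, hgw, hw, hw0⟩ :=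
    h.exists_isPrimitive_row hσ' (e := ![1, 2, 3]) (by decide) (p := 0) (q := 1) rfl rfl
  obtain ⟨a, ha, hwa⟩ := exists_ne_zero_forall_eval_eq_zero hσ w hw0
  have hsupp : ∀ i j : Fin 8, i ≠ 0 → j ≠ 7 → i < j →
      ((∀ x : Fin 3, ![1, 2, 3] x ≠ i) ∨ ∀ y : Fin 3, ![4, 5, 6] y ≠ j) →
      i = 1 ∧ (j = 2 ∨ j = 3) ∨ i = 2 ∧ j = 3 ∨ i = 4 ∧ (j = 5 ∨ j = 6) ∨ i = 5 ∧ j = 6 := by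
    decide
  refine ⟨a, ha, (h.rank_zeroOut_le_rank_submatrix (f := ![1, 2, 3]) (g := ![4, 5, 6]) (by decide)
    (by decide) (by decide) (by decide) fun i j h0 h7 hlt hij => ?_).trans
    (hw.rank_map_eval_le_one (h.vecMul_submatrix_eq_zero_of_row h45 h46 h56 hg hgw) hwa)⟩
  obtain ⟨rfl, rfl | rfl⟩ | ⟨rfl, rfl⟩ | ⟨rfl, rfl | rfl⟩ | ⟨rfl, rfl⟩ :=
    hsupp i j h0 h7 hlt hij <;>
    simp only [h12, h13, h23, h45, h46, h56, map_zero]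

theorem exists_rank_zeroOut_le_one_of_apply_three_four_eq_zero (h : IsTriangularDifferential d D)
    (hσ : 3 < Nat.card σ) (h34 : D 3 4 = 0) :
    ∃ a ≠ 0, (zeroOut {0} {7} (D.map (eval a))).rank ≤ 1 := by
  have hσ' : 2 < Nat.card σ := by omega
  have h12 := h.apply_one_two_eq_zero hσ'
  have h56 := h.apply_five_six_eq_zero hσ'
  obtain ⟨g, w, hg, hgw, hw, hw0⟩ := h.exists_isPrimitive_row hσ'
    (e := (![1, 2] : Fin 2 → Fin 8)) (by decide) (p := 0) (q := 1) rfl rfl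
  obtain ⟨g', w', hg', hgw', hw'⟩ := h.exists_isPrimitive_col hσ'
  have hG := h.submatrix_mulVec_eq_zero_of_col h34 hg' hgw'
  have hdet : eval 0 (D.submatrix ![1, 2] ![6, 5]).det = 0 := by
    rw [RingHom.map_det, RingHom.mapMatrix_apply, ← Matrix.submatrix_map, h.map_eval_zero]
    exact Matrix.det_zero
  obtain ⟨a, ha, haf⟩ := exists_ne_zero_forall_eval_eq_zero hσ
    ![w 0, w 1, (D.submatrix ![1, 2] ![6, 5]).det]
    (Fin.forall_fin_succ.2 ⟨hw0 0, Fin.forall_fin_two.2 ⟨hw0 1, hdet⟩⟩)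
  have hwa : ∀ i, eval a (w i) = 0 := Fin.forall_fin_two.2 ⟨haf 0, haf 1⟩
  obtain ⟨v, hv, hEv, hGv⟩ := hw.exists_map_eval_mulVec_eq_zero hw'
    (h.dotProduct_submatrix_mulVec_eq_zero h56 hg hgw hG) hG hwa (haf 2)
  have hrank := rank_lt_card_of_mulVec_eq_zero hv
    (M := (D.submatrix ![1, 2, 3, 4] ![6, 5]).map (eval a)) <| funext <| Fin.forall_fin_succ.2
      ⟨congrFun hEv 0, Fin.forall_fin_succ.2 ⟨congrFun hEv 1, Fin.forall_fin_two.2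
        ⟨congrFun hGv 0, congrFun hGv 1⟩⟩⟩
  have hsupp : ∀ i j : Fin 8, i ≠ 0 → j ≠ 7 → i < j →
      ((∀ x : Fin 4, ![1, 2, 3, 4] x ≠ i) ∨ ∀ y : Fin 2, ![6, 5] y ≠ j) →
      (i = 1 ∨ i = 2) ∧ (j = 3 ∨ j = 4) ∨ i = 1 ∧ j = 2 ∨ i = 3 ∧ j = 4 ∨ i = 5 ∧ j = 6 := by
    decide
  refine ⟨a, ha, (h.rank_zeroOut_le_rank_submatrix (f := ![1, 2, 3, 4]) (g := ![6, 5]) (by decide)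
    (by decide) (by decide) (by decide) fun i j h0 h7 hlt hij => ?_).trans
    (Nat.lt_succ_iff.1 hrank)⟩
  obtain ⟨hi, hj⟩ | ⟨rfl, rfl⟩ | ⟨rfl, rfl⟩ | ⟨rfl, rfl⟩ := hsupp i j h0 h7 hlt hij
  · exact h.eval_apply_three_four_eq_zero h34 hg hw hgw hwa hi hj
  all_goals simp only [h12, h34, h56, map_zero]

theorem card_le_three (h : IsTriangularDifferential d D) : Nat.card σ ≤ 3 := by
  by_contra! hσ
  obtain ⟨a, ha, hrank⟩ : ∃ a ≠ 0, (zeroOut {0} {7} (D.map (eval a))).rank ≤ 1 := by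
    by_cases h34 : D 3 4 = 0
    · exact h.exists_rank_zeroOut_le_one_of_apply_three_four_eq_zero hσ h34
    · exact h.exists_rank_zeroOut_le_one_of_apply_three_four_ne_zero hσ h34
  have h4 := h.isExactOffOrigin.two_mul_rank a ha
  have hle := rank_le_rank_zeroOut_add {0} {7} (D.map (eval a))
  rw [Finset.card_singleton, Finset.card_singleton] at hle
  rw [Fintype.card_fin] at h4
  omega

end IsTriangularDifferential

theorem StandardConditions.exists_isTriangularDifferential {k : Type*} [Field k] {r : ℕ}
    {D : Matrix (Fin 8) (Fin 8) (MvPolynomial (Fin r) k)} (h : StandardConditions D) :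
    ∃ d, IsTriangularDifferential d D := by
  obtain ⟨htri, hsq, h0, hrank, d, hd, hhom⟩ := h
  refine ⟨d, ⟨hsq, fun a ha => by rw [hrank a ha, Fintype.card_fin]⟩, fun i j => ?_, hd, htri,
    Matrix.ext h0⟩
  obtain hij | ⟨hnonneg, hij⟩ := hhom i j
  · rw [hij]
    exact isWeightedHomogeneous_zero k _ _
  · rw [← Int.toNat_of_nonneg hnonneg]
    exact isIntHomogeneous_natCast_iff.2 hij

theorem statement_2 {k : Type*} [Field k] [IsAlgClosed k] {r : ℕ} (hr : 0 < r)
    {R C : ℕ} (hR : 0 < R) (hC : 0 < C)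
    (D : Matrix (Fin 8) (Fin 8) (MvPolynomial (Fin r) k))
    (hstd : StandardConditions D)
    (hzero : ∀ i j : Fin 8, ((j : ℕ) + 1 ≤ C ∨ (i : ℕ) + 1 ≥ 9 - R) → D i j = 0) :
    8 ≥ 2 ^ (r - 1) * (R + C) := by
  obtain ⟨d, h⟩ := hstd.exists_isTriangularDifferential
  have hcols : ∀ j : Fin 8, j < C → Dᵀ j = 0 := fun j hj => funext fun i => hzero i j (.inl hj)
  have hrows : ∀ i : Fin 8, 8 ≤ i + R → D i = 0 := fun i hi =>
    funext fun j => hzero i j (.inr (by omega))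
  have hr3 : r ≤ 3 := Nat.card_fin r ▸ h.card_le_three
  interval_cases r
  · have := h.le_four_of_zero_cols hcols
    have := h.le_four_of_zero_rows hrows
    omega
  · have := h.add_le_four hcols hrows
    omega
  · have hσ : 2 < Nat.card (Fin 3) := by simp
    have := h.le_one_of_zero_cols hσ hcols
    have := h.le_one_of_zero_rows hσ hrows
    omega
end

section
/- Let k be an algebraically closed field and S = k[x_1,...,x_r]. Suppose D = (p_{ij}) is an 8×8 matrix with entries in S satisfying the standard conditions, and suppose moreover that p_{ij} = 0 unless either (1 ≤ i ≤ 3 and 4 ≤ j ≤ 8) or (4 ≤ i ≤ 5 and 6 ≤ j ≤ 8). Then r < 2, i.e., r ≤ 1. -/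
open MvPolynomial

/-!
In block form `D = [0 A B; 0 0 C; 0 0 0]` with blocks of sizes `n, 2, n`, and `D² = 0` says
`A * C = 0`. If `A` or `C` vanishes then `D` has rank at most `n`. Otherwise all `2 × 2` minors of
`A` and of `C` vanish, so over the factorial ring of polynomials `A = u sᵀ` and `C = p zᵀ`, and
hence `D` factors through the `(n + 1) × (n + 1)` matrix `[B u; zᵀ 0]`. If `D` has rank greater
than `n` away from the origin, the determinant of this matrix has no zero there; but it does vanish
at the origin, where `B` does and `n + 1 > 2`. In two or more variables no polynomial over an
algebraically closed field has the origin as its only zero.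
-/

open Matrix

section IsolatedZero

variable {σ k : Type*}

lemma exists_polynomial_eval_add_smul [CommSemiring k] (f : MvPolynomial σ k) (a v : σ → k) :
    ∃ p : Polynomial k, ∀ t, p.eval t = eval (a + t • v) f := by
  refine ⟨eval₂ Polynomial.C (fun i ↦ Polynomial.C (a i) + Polynomial.C (v i) * Polynomial.X) f,
    fun t ↦ ?_⟩
  induction f using MvPolynomial.induction_on with
  | C c => simp
  | add f g hf hg => simp [hf, hg]
  | mul_X f i hf => simp [hf, mul_comm t]

variable [Field k] [IsAlgClosed k] {f : MvPolynomial σ k}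

lemma eval_add_smul_eq_of_forall_ne_zero {a v : σ → k} (h : ∀ t : k, eval (a + t • v) f ≠ 0)
    (t : k) : eval (a + t • v) f = eval a f := by
  obtain ⟨p, hp⟩ := exists_polynomial_eval_add_smul f a v
  have hdeg : p.degree = 0 := by
    by_contra hdeg
    obtain ⟨t, ht⟩ := IsAlgClosed.exists_root p hdeg
    exact h t (hp t ▸ ht)
  have hconst : p.eval t = p.eval 0 := by
    rw [Polynomial.eq_C_of_degree_eq_zero hdeg, Polynomial.eval_C, Polynomial.eval_C]
  simpa only [hp, zero_smul, add_zero] using hconst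

theorem eval_zero_ne_zero_of_forall_ne_zero [Nontrivial σ] (h : ∀ a ≠ 0, eval a f ≠ 0) :
    eval 0 f ≠ 0 := by
  classical
  obtain ⟨i, j, hij⟩ := exists_pair_ne σ
  let x : σ → k := Pi.single i 1
  let y : σ → k := Pi.single j 1
  have hx (t : k) (ht : t ≠ 0) (s : k) : t • x + s • y ≠ 0 :=
    fun h0 ↦ ht (by simpa [x, y, hij] using congrFun h0 i)
  have hy (t : k) : y + t • x ≠ 0 := fun h0 ↦ by simpa [x, y, hij.symm] using congrFun h0 j
  -- The segments of the path `t • x`, `t • x + y`, `y` lie on lines that avoid the origin.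
  have hpunctured (t : k) (ht : t ≠ 0) : eval (t • x) f = eval y f := calc
    eval (t • x) f = eval (t • x + (1 : k) • y) f :=
      (eval_add_smul_eq_of_forall_ne_zero (fun s ↦ h _ (hx t ht s)) 1).symm
    _ = eval (y + t • x) f := by rw [one_smul, add_comm]
    _ = eval y f := eval_add_smul_eq_of_forall_ne_zero (fun s ↦ h _ (hy s)) t
  obtain ⟨p, hp⟩ := exists_polynomial_eval_add_smul f 0 x
  simp only [zero_add] at hp
  have hconst : p = Polynomial.C (eval y f) := by
    refine Polynomial.eq_of_infinite_eval_eq _ _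
      ((Set.finite_singleton (0 : k)).infinite_compl.mono fun t ht ↦ ?_)
    simpa [hp] using hpunctured t ht
  have hzero : eval 0 f = eval y f := by simpa [hconst] using (hp 0).symm
  exact hzero ▸ h y (by simpa using hy 0)

end IsolatedZero

section RankOne

variable {l m n R : Type*}

lemma exists_eq_mul_of_mul_eq_mul [CommMonoidWithZero R] [UniqueFactorizationMonoid R]
    {f g : m → R} (h : ∀ i j, f i * g j = g i * f j) :
    ∃ (u : m → R) (s t : R), (∀ i, f i = u i * s) ∧ ∀ i, g i = u i * t := by
  by_cases hf : ∀ i, f i = 0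
  · exact ⟨g, 0, 1, by simpa using hf, by simp⟩
  obtain ⟨i, hi⟩ := not_forall.1 hf
  obtain ⟨s, t, c, hst, hs, ht⟩ :=
    UniqueFactorizationMonoid.exists_reduced_factors (f i) hi (g i)
  have hc : c ≠ 0 := left_ne_zero_of_mul (hs ▸ hi)
  have hs0 : s ≠ 0 := right_ne_zero_of_mul (hs ▸ hi)
  have hcross (j : m) : s * g j = t * f j :=
    mul_left_cancel₀ hc (by rw [← mul_assoc, ← mul_assoc, hs, ht, h])
  choose u hu using fun j ↦ hst.dvd_of_dvd_mul_left ⟨g j, (hcross j).symm⟩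
  refine ⟨u, s, t, fun j ↦ by rw [hu, mul_comm], fun j ↦ mul_left_cancel₀ hs0 ?_⟩
  rw [hcross, hu, mul_left_comm, mul_comm t]

lemma det_submatrix_eq_zero_of_mul_eq_zero [CommRing R] [IsDomain R] [Fintype l] [DecidableEq l]
    {A : Matrix m l R} {C : Matrix l n R} (hC : C ≠ 0) (hAC : A * C = 0) (e : l → m) :
    (A.submatrix e id).det = 0 := by
  obtain ⟨j, hj⟩ : ∃ j, C.col j ≠ 0 := by
    by_contra! hcol
    exact hC (Matrix.ext fun i j ↦ congrFun (hcol j) i)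
  exact exists_mulVec_eq_zero_iff.1 ⟨C.col j, hj, funext fun i ↦ congrFun₂ hAC (e i) j⟩

theorem exists_eq_vecMulVec_of_mul_eq_zero [CommRing R] [IsDomain R] [UniqueFactorizationMonoid R]
    {A : Matrix m (Fin 2) R} {C : Matrix (Fin 2) n R} (hC : C ≠ 0) (hAC : A * C = 0) :
    ∃ u s, A = vecMulVec u s := by
  have hminor (i j : m) : A i 0 * A j 1 = A i 1 * A j 0 := by
    have hdet := det_submatrix_eq_zero_of_mul_eq_zero hC hAC ![i, j]
    rwa [det_fin_two, sub_eq_zero] at hdet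
  obtain ⟨u, s, t, hs, ht⟩ := exists_eq_mul_of_mul_eq_mul hminor
  exact ⟨u, ![s, t], Matrix.ext fun i j ↦ by fin_cases j <;> simp [vecMulVec_apply, hs, ht]⟩

end RankOne

section Rank

variable {l l' m n R : Type*}

/-- The matrix `B` bordered by a last column `u` and a last row `z`, with corner entry `0`. The
block matrix `[u sᵀ, B; 0, p zᵀ]` factors through it. -/
def borderedMatrix [Zero R] (B : Matrix m n R) (u : m → R) (z : n → R) :
    Matrix (m ⊕ Unit) (n ⊕ Unit) R :=
  fromBlocks B (replicateCol Unit u) (replicateRow Unit z) 0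

lemma map_borderedMatrix {S : Type*} [Zero R] [Zero S] {f : R → S} (hf : f 0 = 0)
    (B : Matrix m n R) (u : m → R) (z : n → R) :
    (borderedMatrix B u z).map f = borderedMatrix (B.map f) (f ∘ u) (f ∘ z) := by
  simp only [borderedMatrix, fromBlocks_map, Matrix.map_zero _ hf]
  rfl

variable [Fintype n]

lemma fromBlocks_vecMulVec_eq_mul [Semiring R] [Fintype m] [DecidableEq m] [DecidableEq n]
    (B : Matrix m n R) (u : m → R) (s : l → R) (p : l' → R) (z : n → R) :
    fromBlocks (vecMulVec u s) B 0 (vecMulVec p z) =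
      (fromBlocks 1 0 0 (replicateCol Unit p) : Matrix _ (m ⊕ Unit) R) * borderedMatrix B u z *
        (fromBlocks 0 1 (replicateRow Unit s) 0 : Matrix (n ⊕ Unit) _ R) := by
  simp [borderedMatrix, fromBlocks_multiply, vecMulVec_eq Unit]

variable [Fintype l] [CommRing R]

lemma rank_map_fromBlocks_vecMulVec_le [Finite m] {S : Type*} [CommRing S]
    [StrongRankCondition S] (f : R →+* S) (B : Matrix m n R) (u : m → R) (s : l → R) (p : l' → R)
    (z : n → R) :
    ((fromBlocks (vecMulVec u s) B 0 (vecMulVec p z)).map f).rank ≤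
      ((borderedMatrix B u z).map f).rank := by
  classical
  have := Fintype.ofFinite m
  rw [fromBlocks_vecMulVec_eq_mul, Matrix.map_mul, Matrix.map_mul]
  exact (rank_mul_le_left _ _).trans (rank_mul_le_right _ _)

variable [StrongRankCondition R]

lemma rank_borderedMatrix_zero_le [Finite m] (u : m → R) (z : n → R) :
    (borderedMatrix 0 u z).rank ≤ 2 := by
  have := Fintype.ofFinite m
  have hfactor : borderedMatrix 0 u z =
      (fromBlocks (replicateCol Unit u) 0 0 1 : Matrix _ (Unit ⊕ Unit) R) *
        (fromBlocks 0 1 (replicateRow Unit z) 0 : Matrix (Unit ⊕ Unit) _ R) := by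
    simp [borderedMatrix, fromBlocks_multiply]
  rw [hfactor]
  exact (rank_mul_le_left _ _).trans (rank_le_card_width _)

lemma rank_fromBlocks_zero_left_le (B : Matrix m n R) (C : Matrix l' n R) :
    (fromBlocks (0 : Matrix m l R) B 0 C).rank ≤ Fintype.card n := by
  classical
  have hfactor : fromBlocks (0 : Matrix m l R) B 0 C =
      fromRows B C * (fromCols 0 1 : Matrix n (l ⊕ n) R) := by
    rw [fromRows_mul_fromCols]
    simp only [Matrix.mul_zero, Matrix.mul_one]
  rw [hfactor]
  exact (rank_mul_le_left _ _).trans (rank_le_card_width _)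

lemma rank_fromBlocks_zero_bottom_le [Fintype m] (A : Matrix m l R) (B : Matrix m n R) :
    (fromBlocks A B (0 : Matrix l' l R) 0).rank ≤ Fintype.card m := by
  classical
  have hfactor : fromBlocks A B (0 : Matrix l' l R) 0 =
      (fromRows 1 0 : Matrix (m ⊕ l') m R) * fromCols A B := by
    rw [fromRows_mul_fromCols]
    simp only [Matrix.zero_mul, Matrix.one_mul]
  rw [hfactor]
  exact (rank_mul_le_left _ _).trans (rank_le_card_width _)

end Rank

lemma det_ne_zero_of_card_le_rank {n K : Type*} [Fintype n] [DecidableEq n] [Field K]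
    {A : Matrix n n K} (h : Fintype.card n ≤ A.rank) : A.det ≠ 0 := by
  have hcols : LinearIndependent K A.col :=
    linearIndependent_iff_card_le_finrank_span.2 (h.trans_eq A.rank_eq_finrank_span_cols)
  exact ((isUnit_iff_isUnit_det A).1 (linearIndependent_cols_iff_isUnit.1 hcols)).ne_zero

section Submatrix

variable {l m n m₀ n₀ R : Type*}

lemma submatrix_mul_submatrix_of_injective [NonUnitalNonAssocSemiring R] [Fintype m] [Fintype m₀]
    (A : Matrix l m R) (B : Matrix m n R) {e : m₀ → m} (he : e.Injective)
    (h : ∀ x ∉ Set.range e, ∀ i j, A i x * B x j = 0) :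
    A.submatrix id e * B.submatrix e id = A * B :=
  Matrix.ext fun i j ↦ Fintype.sum_of_injective e he _ _ (fun x hx ↦ h x hx i j) fun _ ↦ rfl

lemma rank_le_rank_submatrix_s3 [CommRing R] [StrongRankCondition R] [Finite m] [Finite m₀] [Fintype n]
    [Fintype n₀] (A : Matrix m n R) {e : m₀ → m} {f : n₀ → n} (he : e.Injective) (hf : f.Injective)
    (hrow : ∀ i ∉ Set.range e, ∀ j, A i j = 0) (hcol : ∀ j ∉ Set.range f, ∀ i, A i j = 0) :
    A.rank ≤ (A.submatrix e f).rank := by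
  classical
  have := Fintype.ofFinite m
  have := Fintype.ofFinite m₀
  have hcols : (A.submatrix id f).rank ≤ (A.submatrix e f).rank := by
    rw [← Matrix.one_mul (A.submatrix id f), ← submatrix_mul_submatrix_of_injective 1 _ he
      fun x hx i j ↦ by simp [hrow x hx]]
    exact rank_mul_le_right _ _
  have hrows : A.rank ≤ (A.submatrix id f).rank := by
    conv_lhs => rw [← Matrix.mul_one A, ← submatrix_mul_submatrix_of_injective A 1 hf
      fun x hx i j ↦ by simp [hcol x hx]]
    exact rank_mul_le_left _ _
  exact hrows.trans hcols

end Submatrix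

section BlockStrictUpper

variable {ι m₀ m₁ m₂ R : Type*} [CommRing R] [Fintype ι] [Fintype m₁] {b : ι → Fin 3}
  {D : Matrix ι ι R} {e₀ : m₀ → ι} {e₁ : m₁ → ι} {e₂ : m₂ → ι}

lemma submatrix_mul_submatrix_eq_zero_of_sq_eq_zero (hblock : ∀ i j, b j ≤ b i → D i j = 0)
    (hsq : D * D = 0) (h₀ : ∀ x, b (e₀ x) = 0) (he₁ : e₁.Injective)
    (hr₁ : Set.range e₁ = {i | b i = 1}) (h₂ : ∀ x, b (e₂ x) = 2) :
    D.submatrix e₀ e₁ * D.submatrix e₁ e₂ = 0 := by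
  have hmiddle (x : ι) (hx : x ∉ Set.range e₁) (i : m₀) (j : m₂) :
      D (e₀ i) x * D x (e₂ j) = 0 := by
    have hbx : b x ≠ 1 := fun h ↦ hx (hr₁.superset h)
    obtain hbx | hbx : b x = 0 ∨ b x = 2 := by lia
    · exact mul_eq_zero_of_left (hblock _ _ (by rw [h₀, hbx])) _
    · exact mul_eq_zero_of_right _ (hblock _ _ (by rw [h₂, hbx]))
  calc D.submatrix e₀ e₁ * D.submatrix e₁ e₂
    _ = D.submatrix e₀ id * D.submatrix id e₂ :=
      submatrix_mul_submatrix_of_injective (D.submatrix e₀ id) (D.submatrix id e₂) he₁ hmiddle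
    _ = (D * D).submatrix e₀ e₂ := (submatrix_mul _ _ e₀ id e₂ Function.bijective_id).symm
    _ = 0 := by rw [hsq, submatrix_zero, Pi.zero_apply, Pi.zero_apply]

lemma rank_le_rank_fromBlocks_submatrix [StrongRankCondition R] [Finite m₀] [Fintype m₂]
    (hblock : ∀ i j, b j ≤ b i → D i j = 0) (he₀ : e₀.Injective) (he₁ : e₁.Injective)
    (he₂ : e₂.Injective) (hr₀ : Set.range e₀ = {i | b i = 0})
    (hr₁ : Set.range e₁ = {i | b i = 1}) (hr₂ : Set.range e₂ = {i | b i = 2}) :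
    D.rank ≤ (fromBlocks (D.submatrix e₀ e₁) (D.submatrix e₀ e₂) 0 (D.submatrix e₁ e₂)).rank := by
  have h₀ (x) : b (e₀ x) = 0 := hr₀.subset ⟨x, rfl⟩
  have h₁ (x) : b (e₁ x) = 1 := hr₁.subset ⟨x, rfl⟩
  have h₂ (x) : b (e₂ x) = 2 := hr₂.subset ⟨x, rfl⟩
  have hblocks : fromBlocks (D.submatrix e₀ e₁) (D.submatrix e₀ e₂) 0 (D.submatrix e₁ e₂) =
      D.submatrix (Sum.elim e₀ e₁) (Sum.elim e₁ e₂) := by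
    ext (x | x) (y | y) : 2
    exacts [rfl, rfl, (hblock (e₁ x) (e₁ y) (by rw [h₁, h₁])).symm, rfl]
  rw [hblocks]
  refine rank_le_rank_submatrix_s3 _ ?_ ?_ (fun i hi j ↦ hblock i j ?_) fun j hj i ↦ hblock i j ?_
  · exact he₀.sumElim he₁ fun x y h ↦ by simpa [h₀, h₁] using congrArg b h
  · exact he₁.sumElim he₂ fun x y h ↦ by simpa [h₁, h₂] using congrArg b h
  · simp only [Set.Sum.elim_range, hr₀, hr₁, Set.mem_union, Set.mem_ofPred_eq] at hi
    lia
  · simp only [Set.Sum.elim_range, hr₁, hr₂, Set.mem_union, Set.mem_ofPred_eq] at hj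
    lia

end BlockStrictUpper

section Main

variable {σ k : Type*} [Field k] [IsAlgClosed k]

theorem subsingleton_of_card_lt_rank_fromBlocks {n : Type*} [Fintype n]
    (hn : 1 < Fintype.card n) {A : Matrix n (Fin 2) (MvPolynomial σ k)}
    {B : Matrix n n (MvPolynomial σ k)} {C : Matrix (Fin 2) n (MvPolynomial σ k)}
    (hAC : A * C = 0) (hB : ∀ i j, eval 0 (B i j) = 0)
    (hrank : ∀ a : σ → k, a ≠ 0 → Fintype.card n < ((fromBlocks A B 0 C).map (eval a)).rank) :
    Subsingleton σ := by
  classical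
  by_contra hσ
  rw [not_subsingleton_iff_nontrivial] at hσ
  obtain ⟨a, ha⟩ := exists_ne (0 : σ → k)
  have hA : A ≠ 0 := by
    rintro rfl
    refine (hrank a ha).not_ge ?_
    rw [fromBlocks_map, Matrix.map_zero _ (map_zero _), Matrix.map_zero _ (map_zero _)]
    exact rank_fromBlocks_zero_left_le _ _
  have hC : C ≠ 0 := by
    rintro rfl
    refine (hrank a ha).not_ge ?_
    rw [fromBlocks_map, Matrix.map_zero _ (map_zero _), Matrix.map_zero _ (map_zero _)]
    exact rank_fromBlocks_zero_bottom_le _ _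
  obtain ⟨u, s, rfl⟩ := exists_eq_vecMulVec_of_mul_eq_zero hC hAC
  obtain ⟨z, p, hzp⟩ : ∃ z p, Cᵀ = vecMulVec z p :=
    exists_eq_vecMulVec_of_mul_eq_zero (C := (vecMulVec u s)ᵀ) (by rwa [Ne, transpose_eq_zero])
      (by rw [← transpose_mul, hAC, transpose_zero])
  obtain rfl : C = vecMulVec p z := by rw [← transpose_transpose C, hzp, transpose_vecMulVec]
  have hdet (a : σ → k) :
      eval a (borderedMatrix B u z).det = ((borderedMatrix B u z).map (eval a)).det :=
    RingHom.map_det _ _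
  refine eval_zero_ne_zero_of_forall_ne_zero (f := (borderedMatrix B u z).det) (fun a ha ↦ ?_) ?_
  · rw [hdet]
    refine det_ne_zero_of_card_le_rank ?_
    simpa using (hrank a ha).trans_le (rank_map_fromBlocks_vecMulVec_le (eval a) B u s p z)
  · rw [hdet, map_borderedMatrix (map_zero _), show B.map (eval 0) = 0 from Matrix.ext hB]
    by_contra hdet0
    have hle := rank_borderedMatrix_zero_le (eval 0 ∘ u) (eval 0 ∘ z)
    rw [rank_of_det_ne_zero hdet0, Fintype.card_sum, Fintype.card_unit] at hle
    lia

lemma exists_injective_range_eq_of_card_eq {ι : Type*} {p : ι → Prop} [Fintype {i // p i}] {n : ℕ}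
    (h : Fintype.card {i // p i} = n) :
    ∃ e : Fin n → ι, e.Injective ∧ Set.range e = {i | p i} :=
  let e := (Fintype.equivFinOfCardEq h).symm
  ⟨Subtype.val ∘ e, Subtype.val_injective.comp e.injective, by
    rw [e.surjective.range_comp, Subtype.range_coe_subtype]⟩

theorem statement_3_general {ι : Type*} [Fintype ι] {n : ℕ} (hn : 1 < n) (b : ι → Fin 3)
    (hb₀ : Fintype.card {i // b i = 0} = n) (hb₁ : Fintype.card {i // b i = 1} = 2)
    (hb₂ : Fintype.card {i // b i = 2} = n) (D : Matrix ι ι (MvPolynomial σ k))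
    (hblock : ∀ i j, b j ≤ b i → D i j = 0) (hsq : D * D = 0)
    (hzero : ∀ i j, b i = 0 → b j = 2 → eval 0 (D i j) = 0)
    (hrank : ∀ a : σ → k, a ≠ 0 → n < (D.map (eval a)).rank) : Subsingleton σ := by
  obtain ⟨e₀, he₀, hr₀⟩ := exists_injective_range_eq_of_card_eq hb₀
  obtain ⟨e₁, he₁, hr₁⟩ := exists_injective_range_eq_of_card_eq hb₁
  obtain ⟨e₂, he₂, hr₂⟩ := exists_injective_range_eq_of_card_eq hb₂
  have h₀ (x) : b (e₀ x) = 0 := hr₀.subset ⟨x, rfl⟩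
  have h₂ (x) : b (e₂ x) = 2 := hr₂.subset ⟨x, rfl⟩
  refine subsingleton_of_card_lt_rank_fromBlocks (B := D.submatrix e₀ e₂)
    (by rwa [Fintype.card_fin])
    (submatrix_mul_submatrix_eq_zero_of_sq_eq_zero hblock hsq h₀ he₁ hr₁ h₂)
    (fun i j ↦ hzero _ _ (h₀ i) (h₂ j)) fun a ha ↦ ?_
  have hblock_eval (i j) (hij : b j ≤ b i) : D.map (eval a) i j = 0 := by
    rw [map_apply, hblock i j hij, map_zero]
  rw [Fintype.card_fin, fromBlocks_map, Matrix.map_zero _ (map_zero _)]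
  exact (hrank a ha).trans_le
    (rank_le_rank_fromBlocks_submatrix hblock_eval he₀ he₁ he₂ hr₀ hr₁ hr₂)

end Main

theorem statement_3 {k : Type*} [Field k] [IsAlgClosed k] {r : ℕ}
    (D : Matrix (Fin 8) (Fin 8) (MvPolynomial (Fin r) k))
    (hstd : StandardConditions D)
    (hzero : ∀ i j : Fin 8,
        ¬((1 ≤ (i : ℕ) + 1 ∧ (i : ℕ) + 1 ≤ 3 ∧ 4 ≤ (j : ℕ) + 1 ∧ (j : ℕ) + 1 ≤ 8) ∨
          (4 ≤ (i : ℕ) + 1 ∧ (i : ℕ) + 1 ≤ 5 ∧ 6 ≤ (j : ℕ) + 1 ∧ (j : ℕ) + 1 ≤ 8)) →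
        D i j = 0) :
    r < 2 := by
  obtain ⟨-, hsq, horigin, hrank, -⟩ := hstd
  have hsub : Subsingleton (Fin r) :=
    statement_3_general (n := 3) (by simp) ![0, 0, 0, 1, 1, 2, 2, 2] (by decide) (by decide)
      (by decide) D (fun i j hij ↦ hzero i j (by revert i j; decide)) hsq
      (fun i j _ _ ↦ horigin i j) fun a ha ↦ by simp [hrank a ha]
  exact Nat.lt_succ_of_le (Fin.subsingleton_iff_le_one.1 hsub)
end
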